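/- arXiv:2503.13243 — 14 statements merged into one kernel-verified Lean document; each statement's English description precedes it below -/
import Mathlib

section
/- Let p denote the order of σ₁. Then p ≥ 3 and the group G = ⟨σ₁, σ₂⟩ acts transitively on the arcs of Γ. -/
theorem statement0 {V : Type*} [Fintype V] [DecidableEq V]
    (q : ℕ) (hq : 3 ≤ q)
    (Γ : SimpleGraph V) [DecidableRel Γ.Adj]
    (hconn : Γ.Connected) (hreg : ∀ x : V, Γ.degree x = q)
    (v : V) (σ₁ σ₂ : Equiv.Perm V)
    (haut₁ : ∀ x y : V, Γ.Adj (σ₁ x) (σ₁ y) ↔ Γ.Adj x y)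
    (haut₂ : ∀ x y : V, Γ.Adj (σ₂ x) (σ₂ y) ↔ Γ.Adj x y)
    (hfix : σ₂ v = v)
    (htrans : ∀ w w' : V, Γ.Adj v w → Γ.Adj v w' → ∃ k : ℤ, (σ₂ ^ k) w = w')
    (hnbr : Γ.Adj v (σ₁ v))
    (hinvol : (σ₁ * σ₂) * (σ₁ * σ₂) = 1) :
    3 ≤ orderOf σ₁ ∧
      ∀ u₁ w₁ u₂ w₂ : V, Γ.Adj u₁ w₁ → Γ.Adj u₂ w₂ →
        ∃ g ∈ Subgroup.closure {σ₁, σ₂}, g u₁ = u₂ ∧ g w₁ = w₂ := by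
  set G := Subgroup.closure ({σ₁, σ₂} : Set (Equiv.Perm V)) with hG
  have h1 : σ₁ ∈ G := Subgroup.subset_closure (by simp)
  have h2 : σ₂ ∈ G := Subgroup.subset_closure (by simp)
  have ais : ∀ (g : Equiv.Perm V) (x : V), g (g⁻¹ x) = x := fun g x => Equiv.apply_symm_apply g x
  have haut : ∀ g ∈ G, ∀ x y : V, Γ.Adj (g x) (g y) ↔ Γ.Adj x y := by
    intro g hg
    induction hg using Subgroup.closure_induction with
    | mem g h =>
      rcases h with rfl | rfl
      · exact haut₁
      · exact haut₂
    | one => intro x y; rfl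
    | mul a b _ _ ha hb =>
      intro x y
      rw [Equiv.Perm.mul_apply, Equiv.Perm.mul_apply, ha, hb]
    | inv a _ ha =>
      intro x y
      rw [← ha (a⁻¹ x), ais, ais]
  have hfixk : ∀ k : ℤ, (σ₂ ^ k) v = v := fun k =>
    Function.IsFixedPt.perm_zpow hfix k
  have step : ∀ g ∈ G, ∀ y, Γ.Adj (g v) y → ∃ h ∈ G, h v = g v ∧ h (σ₁ v) = y := by
    intro g hg y hy
    have : Γ.Adj v (g⁻¹ y) := by
      rw [← haut g hg, ais]; exact hy
    obtain ⟨k, hk⟩ := htrans _ _ hnbr this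
    refine ⟨g * σ₂ ^ k, G.mul_mem hg (G.zpow_mem h2 k), ?_, ?_⟩
    · rw [Equiv.Perm.mul_apply, hfixk]
    · rw [Equiv.Perm.mul_apply, hk, ais]
  have vert : ∀ x, ∃ g ∈ G, g v = x := by
    intro x
    obtain ⟨w⟩ := hconn.preconnected v x
    have key : ∀ (a b : V) (_ : Γ.Walk a b), (∃ g ∈ G, g v = a) → ∃ g ∈ G, g v = b := by
      intro a b w
      induction w with
      | nil => exact id
      | cons hadj _ ih =>
        rintro ⟨g, hg, rfl⟩
        obtain ⟨h, hh, _, h4⟩ := step g hg _ hadj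
        exact ih ⟨h * σ₁, G.mul_mem hh h1, h4⟩
    exact key v x w ⟨1, G.one_mem, rfl⟩
  have arc : ∀ x y, Γ.Adj x y → ∃ g ∈ G, g v = x ∧ g (σ₁ v) = y := by
    intro x y hxy
    obtain ⟨g, hg, rfl⟩ := vert x
    exact step g hg y hxy
  constructor
  · by_contra hlt
    have hpos := orderOf_pos σ₁
    have hsq : σ₁ ^ 2 = 1 := by
      apply orderOf_dvd_iff_pow_eq_one.mp
      have : orderOf σ₁ = 1 ∨ orderOf σ₁ = 2 := by omega
      rcases this with h | h <;> rw [h]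
      norm_num
    have hs : ∀ x, σ₁ (σ₁ x) = x := by
      intro x
      have := DFunLike.congr_fun hsq x
      simpa [pow_two] using this
    have hw : σ₂ (σ₁ v) = σ₁ v := by
      have := DFunLike.congr_fun hinvol v
      simp only [Equiv.Perm.mul_apply, hfix, Equiv.Perm.one_apply] at this
      apply σ₁.injective
      rw [this, hs]
    have hwk : ∀ k : ℤ, (σ₂ ^ k) (σ₁ v) = σ₁ v := fun k =>
      Function.IsFixedPt.perm_zpow hw k
    have hsub : Γ.neighborFinset v ⊆ {σ₁ v} := by
      intro y hy
      rw [SimpleGraph.mem_neighborFinset] at hy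
      obtain ⟨k, hk⟩ := htrans _ _ hnbr hy
      rw [Finset.mem_singleton, ← hk, hwk]
    have := Finset.card_le_card hsub
    rw [SimpleGraph.card_neighborFinset_eq_degree, hreg, Finset.card_singleton] at this
    omega
  · intro u₁ w₁ u₂ w₂ ha hb
    obtain ⟨g, hg, rfl, rfl⟩ := arc _ _ ha
    obtain ⟨h, hh, rfl, rfl⟩ := arc _ _ hb
    exact ⟨h * g⁻¹, G.mul_mem hh (G.inv_mem hg), by simp, by simp⟩
end

section
/- Let p denote the order of σ₁ and let w = v·σ₁. If the stabiliser in G = ⟨σ₁, σ₂⟩ of the arc (v, w) is trivial, then the vertices v·σ₁^k for 0 ≤ k ≤ p−1 are pairwise distinct; that is, the closed walk (v, v·σ₁, v·σ₁², …, v·σ₁^p) is a cycle of Γ. -/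
theorem statement1 {V : Type*} [Fintype V] [DecidableEq V]
    (q : ℕ) (hq : 3 ≤ q)
    (Γ : SimpleGraph V) [DecidableRel Γ.Adj]
    (hconn : Γ.Connected) (hreg : ∀ x : V, Γ.degree x = q)
    (v : V) (σ₁ σ₂ : Equiv.Perm V)
    (haut₁ : ∀ x y : V, Γ.Adj (σ₁ x) (σ₁ y) ↔ Γ.Adj x y)
    (haut₂ : ∀ x y : V, Γ.Adj (σ₂ x) (σ₂ y) ↔ Γ.Adj x y)
    (hfix : σ₂ v = v)
    (htrans : ∀ w w' : V, Γ.Adj v w → Γ.Adj v w' → ∃ k : ℤ, (σ₂ ^ k) w = w')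
    (hnbr : Γ.Adj v (σ₁ v))
    (hinvol : (σ₁ * σ₂) * (σ₁ * σ₂) = 1)
    (hstab : ∀ g ∈ Subgroup.closure {σ₁, σ₂}, g v = v → g (σ₁ v) = σ₁ v → g = 1) :
    ∀ k l : ℕ, k < orderOf σ₁ → l < orderOf σ₁ →
      (σ₁ ^ k) v = (σ₁ ^ l) v → k = l := by
  have key : ∀ k l : ℕ, k ≤ l → l < orderOf σ₁ → (σ₁ ^ k) v = (σ₁ ^ l) v → k = l := by
    intro k l hkl hl h
    obtain ⟨m, rfl⟩ := Nat.exists_eq_add_of_le hkl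
    have hm : (σ₁ ^ m) v = v := by
      rw [pow_add, Equiv.Perm.mul_apply] at h
      exact ((σ₁ ^ k).injective h).symm
    have hm' : (σ₁ ^ m) (σ₁ v) = σ₁ v := by
      rw [← Equiv.Perm.mul_apply, ← pow_succ, pow_succ', Equiv.Perm.mul_apply, hm]
    have h1 := hstab (σ₁ ^ m)
      (Subgroup.pow_mem _ (Subgroup.subset_closure (by simp)) m) hm hm'
    have h2 : m = 0 := by
      by_contra h0
      have := orderOf_le_of_pow_eq_one (Nat.pos_of_ne_zero h0) h1
      omega
    omega
  intro k l hk hl h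
  rcases le_total k l with hkl | hkl
  · exact key k l hkl hl h
  · exact (key l k hkl hk h.symm).symm
end

section
/- The permutation σ₁ has order m·n, the permutation σ₂ has order 2m, the product σ₁σ₂ has order 2, and the subgroup G = ⟨σ₁, σ₂⟩ of the automorphism group of Γ has order 2m²n. -/
/-- The lexicographic product `C_n[mK_1]`: vertices `(i,j)` with `(i₁,j₁) ~ (i₂,j₂)`
iff `i₂ = i₁ + 1` or `i₁ = i₂ + 1` (indices modulo `n`). -/
def lexCycle (n m : ℕ) : SimpleGraph (ZMod n × ZMod m) :=
  SimpleGraph.fromRel (fun u v => v.1 = u.1 + 1)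

/-- The representative in `{1, …, n}` of `i` modulo `n`. -/
def zrep {n : ℕ} (i : ZMod n) : ℕ := if i.val = 0 then n else i.val

/-- `ℓ(1) = 0` and `ℓ(i) = 1 + (i-2)(i-1)/2` for `2 ≤ i ≤ n`. -/
def ellFun (i : ℕ) : ℕ := if i = 1 then 0 else 1 + (i - 2) * (i - 1) / 2

theorem aux_card_sup {G : Type*} [Group G] [Finite G] (g : G) (H : Subgroup G)
    (hg : ∀ h ∈ H, g * h * g⁻¹ ∈ H) (hd : Disjoint (Subgroup.zpowers g) H) :
    Nat.card (Subgroup.zpowers g ⊔ H : Subgroup G) = orderOf g * Nat.card H := by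
  have hN : Subgroup.zpowers g ≤ Subgroup.normalizer (H : Set G) := by
    rw [Subgroup.zpowers_le]
    exact Subgroup.mem_normalizer_fintype hg
  have hmul := Subgroup.coe_mul_of_left_le_normalizer_right (Subgroup.zpowers g) H hN
  rw [← Nat.card_zpowers, ← Nat.card_prod]
  symm
  refine Nat.card_congr (Equiv.ofBijective
    (fun p : Subgroup.zpowers g × H => (⟨p.1 * p.2, Subgroup.mul_mem_sup p.1.2 p.2.2⟩ :
      (Subgroup.zpowers g ⊔ H : Subgroup G))) ⟨?_, ?_⟩)
  · intro p q h
    exact Subgroup.mul_injective_of_disjoint hd (by simpa using h)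
  · rintro ⟨x, hx⟩
    have hx' : x ∈ ((Subgroup.zpowers g ⊔ H : Subgroup G) : Set G) := hx
    rw [hmul] at hx'
    obtain ⟨a, ha, b, hb, rfl⟩ := hx'
    exact ⟨(⟨a, ha⟩, ⟨b, hb⟩), rfl⟩

def auxTrans (n m : ℕ) : Subgroup (Equiv.Perm (ZMod n × ZMod m)) where
  carrier := {π | ∃ k, ∀ v, (π v).1 = v.1 + k}
  one_mem' := ⟨0, by simp⟩
  mul_mem' := by
    rintro a b ⟨k, hk⟩ ⟨l, hl⟩
    exact ⟨l + k, fun v => by rw [Equiv.Perm.mul_apply, hk, hl, add_assoc]⟩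
  inv_mem' := by
    rintro a ⟨k, hk⟩
    refine ⟨-k, fun v => ?_⟩
    have := hk (a⁻¹ v)
    rw [show a (a⁻¹ v) = v from Equiv.apply_symm_apply a v] at this
    rw [this]; ring

theorem aux_ell (m n : ℕ) (hm : 3 ≤ m) (hn : m ∣ n) [NeZero n] (i : ZMod n) :
    2 * (ellFun (zrep i) : ZMod m) =
      2 + (ZMod.castHom hn (ZMod m) i - 1) * (ZMod.castHom hn (ZMod m) i - 2)
        - 2 * (if i = 1 then 1 else 0) := by
  have hn3 : 3 ≤ n := hm.trans (Nat.le_of_dvd (NeZero.pos n) hn)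
  obtain ⟨r, hr1, hrn, hri, hrz⟩ : ∃ r : ℕ, 1 ≤ r ∧ r ≤ n ∧ (r : ZMod n) = i ∧ zrep i = r := by
    by_cases h : i.val = 0
    · refine ⟨n, by omega, le_rfl, ?_, by simp [zrep, h]⟩
      rw [ZMod.natCast_self]; exact ((ZMod.val_eq_zero i).1 h).symm
    · exact ⟨i.val, by omega, (ZMod.val_lt i).le, by simp, by simp [zrep, h]⟩
  rw [hrz]
  have hi1 : i = 1 ↔ r = 1 := by
    constructor
    · intro h
      rw [h] at hri
      have h2 : ((r : ℕ) : ZMod n) = ((1 : ℕ) : ZMod n) := by simpa using hri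
      rw [ZMod.natCast_eq_natCast_iff'] at h2
      rw [Nat.mod_eq_of_lt (by omega : 1 < n)] at h2
      rcases hrn.lt_or_eq with h3 | h3
      · rwa [Nat.mod_eq_of_lt h3] at h2
      · subst h3; simp at h2
    · rintro rfl; rw [← hri]; simp
  have hc : ZMod.castHom hn (ZMod m) i = (r : ZMod m) := by
    rw [← hri]; exact map_natCast _ r
  rw [hc]
  by_cases h : r = 1
  · subst h; simp [ellFun, hi1.2 rfl]
  · rw [if_neg (fun h' => h (hi1.1 h')), ellFun, if_neg h]
    obtain ⟨t, rfl⟩ : ∃ t, r = t + 2 := ⟨r - 2, by omega⟩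
    have hev : 2 * ((t + 2 - 2) * (t + 2 - 1) / 2) = t * (t + 1) := by
      have : t + 2 - 2 = t := by omega
      rw [this, show t + 2 - 1 = t + 1 by omega]
      exact Nat.mul_div_cancel' (Nat.even_mul_succ_self t).two_dvd
    have hev' := congrArg (Nat.cast : ℕ → ZMod m) hev
    push_cast at hev' ⊢
    linear_combination hev'

theorem statement2
    (m s n : ℕ) (hm : 3 ≤ m) (hmo : Odd m) (hs : 0 < s) (hn : n = s * m)
    (σ₁ σ₂ : Equiv.Perm (ZMod n × ZMod m))
    (hσ₁ : ∀ (i : ZMod n) (j : ZMod m),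
      σ₁ (i, j) = if i = 1 then (i + 1, j + 1) else (i + 1, j))
    (hσ₂ : ∀ (i : ZMod n) (j : ZMod m),
      σ₂ (i, j) = (2 - i, 2 - j + (ellFun (zrep i) : ZMod m)))
    :
    orderOf σ₁ = m * n ∧ orderOf σ₂ = 2 * m ∧ orderOf (σ₁ * σ₂) = 2 ∧
      Nat.card (Subgroup.closure {σ₁, σ₂} : Subgroup (Equiv.Perm (ZMod n × ZMod m))) = 2 * m ^ 2 * n := by
  have hd : m ∣ n := ⟨s, by rw [hn, mul_comm]⟩
  have hn3 : 3 ≤ n := by rw [hn]; nlinarith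
  have : NeZero n := ⟨by omega⟩
  have : NeZero m := ⟨by omega⟩
  have hell := aux_ell m n hm hd
  clear hs hn
  set c := ZMod.castHom hd (ZMod m) with hcdef
  have hu : IsUnit (2 : ZMod m) := by
    have : IsUnit ((2 : ℕ) : ZMod m) :=
      (ZMod.isUnit_iff_coprime 2 m).2 (Nat.coprime_two_left.2 hmo)
    simpa using this
  have h2 : ∀ x y : ZMod m, 2 * x = 2 * y → x = y := fun x y h => hu.mul_left_cancel h
  have h2n : (2 : ZMod n) ≠ 0 := by
    intro h
    have h' : ((2 : ℕ) : ZMod n) = 0 := by simpa using h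
    rw [ZMod.natCast_eq_zero_iff] at h'
    have := Nat.le_of_dvd (by norm_num) h'
    omega
  have e1 : ∀ i j, σ₁ (i, j) = (i + 1, j + (if i = 1 then 1 else 0)) := by
    intro i j; rw [hσ₁]; split_ifs <;> simp
  -- powers of the first generator
  have p1 : ∀ (t : ℕ) i j, (σ₁ ^ t) (i, j) =
      (i + t, j + ∑ r ∈ Finset.range t, if i + (r : ZMod n) = 1 then (1 : ZMod m) else 0) := by
    intro t
    induction t with
    | zero => intro i j; simp
    | succ t ih =>
      intro i j
      rw [pow_succ', Equiv.Perm.mul_apply, ih, e1, Finset.sum_range_succ]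
      ext
      · push_cast; ring
      · simp only; ring
  have pA : ∀ i j, (σ₁ ^ n) (i, j) = (i, j + 1) := by
    intro i j
    rw [p1, Finset.sum_eq_single (1 - i).val]
    · simp
    · intro b hb hne
      rw [if_neg]
      intro h
      apply hne
      have : (b : ZMod n) = 1 - i := by rw [← h]; ring
      rw [← this, ZMod.val_natCast, Nat.mod_eq_of_lt (Finset.mem_range.1 hb)]
    · intro h
      exact absurd (Finset.mem_range.2 (ZMod.val_lt _)) h
  have pAt : ∀ (t : ℕ) i j, ((σ₁ ^ n) ^ t) (i, j) = (i, j + t) := by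
    intro t
    induction t with
    | zero => intro i j; simp
    | succ t ih =>
      intro i j
      rw [pow_succ', Equiv.Perm.mul_apply, ih, pA]
      push_cast; ring_nf
  have free : ∀ (k : ℕ) i j, (σ₁ ^ k) (i, j) = (i, j) → m * n ∣ k := by
    intro k i j h
    have hk : (k : ZMod n) = 0 := by
      have := congrArg Prod.fst h
      rw [p1] at this
      simpa using this
    obtain ⟨t, rfl⟩ := (ZMod.natCast_eq_zero_iff _ _).1 hk
    rw [pow_mul, pAt] at h
    have ht : (t : ZMod m) = 0 := by simpa using congrArg Prod.snd h
    rw [mul_comm m n]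
    exact Nat.mul_dvd_mul_left n ((ZMod.natCast_eq_zero_iff _ _).1 ht)
  have o1 : orderOf σ₁ = m * n := by
    apply Nat.dvd_antisymm
    · rw [orderOf_dvd_iff_pow_eq_one, mul_comm, pow_mul]
      ext1 ⟨i, j⟩
      rw [pAt]; simp
    · apply free _ 0 0
      rw [pow_orderOf_eq_one]; rfl
  -- square of the second generator
  have hcs : ∀ i : ZMod n, (2 - i = 1 ↔ i = 1) := fun i =>
    ⟨fun h => by linear_combination -h, fun h => by rw [h]; ring⟩
  have pB : ∀ i j, (σ₂ ^ 2) (i, j) = (i, j + (c i - 1)) := by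
    intro i j
    rw [pow_two, Equiv.Perm.mul_apply, hσ₂, hσ₂]
    ext
    · simp
    · apply h2
      have a := hell i
      have b := hell (2 - i)
      simp only [hcs, map_sub, map_ofNat] at a b
      simp only
      linear_combination b - a
  have pBt : ∀ (t : ℕ) i j, ((σ₂ ^ 2) ^ t) (i, j) = (i, j + t * (c i - 1)) := by
    intro t
    induction t with
    | zero => intro i j; simp
    | succ t ih =>
      intro i j
      rw [pow_succ', Equiv.Perm.mul_apply, ih, pB]
      push_cast; ring_nf
  have hBm : ∀ t : ℕ, (σ₂ ^ 2) ^ t = 1 ↔ m ∣ t := by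
    intro t
    constructor
    · intro h
      have h3 := pBt t 2 0
      rw [h] at h3
      have h4 := congrArg Prod.snd h3
      simp only [Equiv.Perm.one_apply, map_ofNat] at h4
      rw [← ZMod.natCast_eq_zero_iff]
      linear_combination -h4
    · intro h
      ext1 ⟨i, j⟩
      rw [pBt, (ZMod.natCast_eq_zero_iff _ _).2 h]; simp
  have oB : orderOf (σ₂ ^ 2) = m :=
    Nat.dvd_antisymm (orderOf_dvd_of_pow_eq_one ((hBm m).2 dvd_rfl))
      ((hBm _).1 (pow_orderOf_eq_one _))
  have o2 : orderOf σ₂ = 2 * m := by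
    apply Nat.dvd_antisymm
    · rw [orderOf_dvd_iff_pow_eq_one, pow_mul, hBm]
    · have h := pow_orderOf_eq_one σ₂
      rcases Nat.even_or_odd' (orderOf σ₂) with ⟨t, ht | ht⟩
      · rw [ht] at h ⊢
        rw [pow_mul, hBm] at h
        exact Nat.mul_dvd_mul_left 2 h
      · exfalso
        rw [ht, pow_succ, pow_mul] at h
        have h3 := congrArg (fun π : Equiv.Perm (ZMod n × ZMod m) => (π (2, 0)).1) h
        simp only [Equiv.Perm.mul_apply, hσ₂, pBt, Equiv.Perm.one_apply] at h3
        apply h2n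
        linear_combination -h3
  have hct : ∀ i : ZMod n, (3 - i = 1 ↔ i = 2) := fun i =>
    ⟨fun h => by linear_combination -h, fun h => by rw [h]; ring⟩
  have pT : ∀ i j, (σ₁ * σ₂) (i, j) =
      (3 - i, 2 - j + (ellFun (zrep i) : ZMod m) + (if i = 1 then 1 else 0)) := by
    intro i j
    rw [Equiv.Perm.mul_apply, hσ₂, e1]
    simp only [hcs]
    ext
    · simp only; ring
    · rfl
  have sT : (σ₁ * σ₂) ^ 2 = 1 := by
    ext1 ⟨i, j⟩
    rw [pow_two, Equiv.Perm.mul_apply, pT, pT]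
    ext
    · simp
    · apply h2
      have a := hell i
      have b := hell (3 - i)
      simp only [map_sub, map_ofNat] at a b
      simp only [Equiv.Perm.one_apply]
      linear_combination b - a
  have nT : ∀ k : ZMod n, ¬ ∀ v, ((σ₁ * σ₂) v).1 = v.1 + k := by
    intro k h
    have a := h (0, 0)
    have b := h (1, 0)
    rw [pT] at a b
    simp only at a b
    apply h2n
    linear_combination a - b
  have oT : orderOf (σ₁ * σ₂) = 2 := by
    apply orderOf_eq_prime sT
    intro h
    exact nT 0 (by rw [h]; simp)
  refine ⟨o1, o2, oT, ?_⟩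
  -- the group
  have cB : σ₂ ^ 2 * σ₁ * (σ₂ ^ 2)⁻¹ = σ₁ ^ (n + 1) := by
    rw [mul_inv_eq_iff_eq_mul]
    ext1 ⟨i, j⟩
    rw [pow_succ σ₁ n, Equiv.Perm.mul_apply, Equiv.Perm.mul_apply, Equiv.Perm.mul_apply, pB, e1, pB,
      e1, pA]
    ext
    · rfl
    · simp only [map_add, map_one]; ring
  have dB : Disjoint (Subgroup.zpowers (σ₂ ^ 2)) (Subgroup.zpowers σ₁) := by
    rw [Subgroup.disjoint_def]
    intro x hx hy
    rw [← mem_powers_iff_mem_zpowers] at hx hy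
    obtain ⟨a, rfl⟩ := hx
    obtain ⟨k, hk⟩ := hy
    simp only at hk ⊢
    rw [← hk, ← orderOf_dvd_iff_pow_eq_one, o1]
    apply free k 1 0
    rw [hk, pBt]; simp
  have cardR := aux_card_sup (σ₂ ^ 2) (Subgroup.zpowers σ₁) (by
    rintro _ ⟨k, rfl⟩
    simp only
    rw [← conj_zpow, cB, ← zpow_natCast, ← zpow_mul]
    exact Subgroup.zpow_mem _ (Subgroup.mem_zpowers _) _) dB
  rw [oB, Nat.card_zpowers, o1] at cardR
  set R := Subgroup.zpowers (σ₂ ^ 2) ⊔ Subgroup.zpowers σ₁ with hR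
  have mB : σ₂ ^ 2 ∈ R := Subgroup.mem_sup_left (Subgroup.mem_zpowers _)
  have m1 : σ₁ ∈ R := Subgroup.mem_sup_right (Subgroup.mem_zpowers _)
  have hconj : ∀ h ∈ R, (σ₁ * σ₂) * h * (σ₁ * σ₂)⁻¹ ∈ R := by
    have : R ≤ R.comap (MulAut.conj (σ₁ * σ₂)).toMonoidHom := by
      rw [hR, sup_le_iff, Subgroup.zpowers_le, Subgroup.zpowers_le, ← hR,
        Subgroup.mem_comap, Subgroup.mem_comap]
      simp only [MulEquiv.toMonoidHom_eq_coe, MonoidHom.coe_coe, MulAut.conj_apply]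
      constructor
      · have : σ₁ * σ₂ * σ₂ ^ 2 * (σ₁ * σ₂)⁻¹ = σ₁ * σ₂ ^ 2 * σ₁⁻¹ := by group
        rw [this]
        exact R.mul_mem (R.mul_mem m1 mB) (R.inv_mem m1)
      · have h3 : σ₂ * σ₁ = σ₁⁻¹ * σ₂⁻¹ := by
          rw [pow_two] at sT
          calc σ₂ * σ₁ = σ₁⁻¹ * (σ₁ * σ₂ * (σ₁ * σ₂)) * σ₂⁻¹ := by group
            _ = _ := by rw [sT, mul_one]
        have : σ₁ * σ₂ * σ₁ * (σ₁ * σ₂)⁻¹ = (σ₂ ^ 2)⁻¹ * σ₁⁻¹ := by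
          rw [mul_assoc σ₁, h3]; group
        rw [this]
        exact R.mul_mem (R.inv_mem mB) (R.inv_mem m1)
    intro h hh
    exact this hh
  have hRT : R ≤ auxTrans n m := by
    rw [hR, sup_le_iff, Subgroup.zpowers_le, Subgroup.zpowers_le]
    refine ⟨⟨0, fun ⟨i, j⟩ => ?_⟩, ⟨1, fun ⟨i, j⟩ => ?_⟩⟩
    · rw [pB]; simp
    · rw [e1]
  have dT : Disjoint (Subgroup.zpowers (σ₁ * σ₂)) R := by
    rw [Subgroup.disjoint_def]
    intro x hx hy
    rw [← mem_powers_iff_mem_zpowers] at hx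
    obtain ⟨a, rfl⟩ := hx
    simp only at hy ⊢
    rcases Nat.even_or_odd' a with ⟨t, rfl | rfl⟩
    · rw [pow_mul, sT, one_pow]
    · exfalso
      rw [pow_succ, pow_mul, sT, one_pow, one_mul] at hy
      obtain ⟨k, hk⟩ := hRT hy
      exact nT k hk
  have cardG := aux_card_sup (σ₁ * σ₂) R hconj dT
  have hG : Subgroup.closure {σ₁, σ₂} = Subgroup.zpowers (σ₁ * σ₂) ⊔ R := by
    apply le_antisymm
    · rw [Subgroup.closure_le]
      have k1 : σ₁ ∈ Subgroup.zpowers (σ₁ * σ₂) ⊔ R := Subgroup.mem_sup_right m1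
      have k2 : σ₁ * σ₂ ∈ Subgroup.zpowers (σ₁ * σ₂) ⊔ R :=
        Subgroup.mem_sup_left (Subgroup.mem_zpowers _)
      rintro x (rfl | rfl)
      · exact k1
      · have := Subgroup.mul_mem _ (Subgroup.inv_mem _ k1) k2
        rwa [inv_mul_cancel_left] at this
    · have k1 : σ₁ ∈ Subgroup.closure {σ₁, σ₂} := Subgroup.subset_closure (by simp)
      have k2 : σ₂ ∈ Subgroup.closure {σ₁, σ₂} := Subgroup.subset_closure (by simp)
      rw [hR, sup_le_iff, sup_le_iff, Subgroup.zpowers_le, Subgroup.zpowers_le,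
        Subgroup.zpowers_le]
      exact ⟨Subgroup.mul_mem _ k1 k2, Subgroup.pow_mem _ k2 2, k1⟩
  rw [hG, cardG, oT, cardR]
  ring
end

section
/- The permutation σ₂ fixes the vertex v = (1,1) of Γ, and the cyclic group ⟨σ₂⟩ acts transitively on the 2m neighbours of v. -/
theorem statement3
    (m s n : ℕ) (hm : 3 ≤ m) (hmo : Odd m) (hs : 0 < s) (hn : n = s * m)
    (σ₂ : Equiv.Perm (ZMod n × ZMod m))
    (hσ₂ : ∀ (i : ZMod n) (j : ZMod m),
      σ₂ (i, j) = (2 - i, 2 - j + (ellFun (zrep i) : ZMod m)))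
    :
    σ₂ ((1, 1) : ZMod n × ZMod m) = (1, 1) ∧
      (∀ w w' : ZMod n × ZMod m,
        (lexCycle n m).Adj ((1, 1) : ZMod n × ZMod m) w →
        (lexCycle n m).Adj ((1, 1) : ZMod n × ZMod m) w' →
        ∃ k : ℤ, (σ₂ ^ k) w = w') := by
  have hn3 : 3 ≤ n := by rw [hn]; nlinarith
  haveI : NeZero n := ⟨by omega⟩
  haveI : NeZero m := ⟨by omega⟩
  haveI : Fact (1 < n) := ⟨by omega⟩
  have hz1 : zrep (1 : ZMod n) = 1 := by
    simp [zrep, ZMod.val_one]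
  have hv2 : (2 : ZMod n).val = 2 := by
    have := ZMod.val_natCast_of_lt (n := n) (a := 2) (by omega)
    simpa using this
  have hz2 : zrep (2 : ZMod n) = 2 := by
    simp [zrep, hv2]
  have hz0 : zrep (0 : ZMod n) = n := by
    simp [zrep]
  have he0 : ((ellFun n : ℕ) : ZMod m) = 2 := by
    obtain ⟨t, ht⟩ : ∃ t, n = t + 2 := ⟨n - 2, by omega⟩
    have hev : 2 ∣ t * (t + 1) := (Nat.even_mul_succ_self t).two_dvd
    have h1 : 2 * ellFun n = 2 + t * (t + 1) := by
      have h3 : ellFun n = 1 + t * (t + 1) / 2 := by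
        unfold ellFun
        rw [if_neg (by omega), ht]
        rfl
      rw [h3]; omega
    have hnm : ((n : ℕ) : ZMod m) = 0 := by rw [hn]; simp
    have htm : (t : ZMod m) = -2 := by
      rw [ht] at hnm; push_cast at hnm; linear_combination hnm
    have h2 : (2 : ZMod m) * ((ellFun n : ℕ) : ZMod m) = 2 * 2 := by
      have := congrArg (fun x : ℕ => (x : ZMod m)) h1
      push_cast at this
      rw [this, htm]; ring
    have hu : IsUnit (2 : ZMod m) := by
      have := (ZMod.isUnit_iff_coprime 2 m).2 (Nat.coprime_two_left.2 hmo)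
      simpa using this
    exact hu.mul_left_cancel h2
  have hs2 : ∀ j : ZMod m, σ₂ (2, j) = (0, 3 - j) := by
    intro j
    rw [hσ₂, hz2]
    ext
    · simp
    · simp [ellFun]; ring
  have hs0 : ∀ j : ZMod m, σ₂ (0, j) = (2, 4 - j) := by
    intro j
    rw [hσ₂, hz0, he0]
    ext
    · simp
    · simp; ring
  have hpow : ∀ k : ℕ, (σ₂ ^ (2 * k)) (2, 0) = (2, (k : ZMod m)) := by
    intro k
    induction k with
    | zero => simp
    | succ k ih =>
      rw [show 2 * (k + 1) = 1 + (1 + 2 * k) by ring, pow_add, pow_add, pow_one,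
        Equiv.Perm.mul_apply, Equiv.Perm.mul_apply, ih, hs2, hs0]
      ext
      · rfl
      · push_cast; ring
  have h2all : ∀ j : ZMod m, ∃ k : ℕ, (σ₂ ^ k) (2, 0) = (2, j) := fun j =>
    ⟨2 * j.val, by rw [hpow]; simp⟩
  have key : ∀ w : ZMod n × ZMod m, (lexCycle n m).Adj ((1, 1) : ZMod n × ZMod m) w →
      ∃ k : ℕ, (σ₂ ^ k) (2, 0) = w := by
    rintro ⟨i, j⟩ hw
    simp only [lexCycle, SimpleGraph.fromRel_adj] at hw
    rcases hw.2 with h | h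
    · have : i = 2 := by rw [h]; norm_num
      subst this
      exact h2all j
    · have : i = 0 := by linear_combination -h
      subst this
      obtain ⟨k, hk⟩ := h2all (3 - j)
      refine ⟨1 + k, ?_⟩
      rw [pow_add, pow_one, Equiv.Perm.mul_apply, hk, hs2]
      simp
  refine ⟨?_, ?_⟩
  · rw [hσ₂, hz1]
    ext
    · norm_num
    · norm_num [ellFun]
  · intro w w' hw hw'
    obtain ⟨a, rfl⟩ := key w hw
    obtain ⟨b, rfl⟩ := key w' hw'
    refine ⟨(b : ℤ) - a, ?_⟩
    rw [← zpow_natCast, ← zpow_natCast, ← Equiv.Perm.mul_apply, ← zpow_add, sub_add_cancel]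
end

section
/- The subgroup G = ⟨σ₁, σ₂⟩ of the automorphism group of Γ acts transitively on the arcs of Γ, and the stabiliser in G of each arc is trivial; that is, G acts simply transitively on the 2m²n arcs of Γ. -/
theorem dvd_conv {a b c : ℤ} (h : a ∣ b) (e : c = b) : a ∣ c := e ▸ h

def fV (n m : ℕ) (k : ℤ) : ZMod n × ZMod m :=
  ((k : ZMod n) + 1, ((-((-k) / (n : ℤ)) : ℤ) : ZMod m))

def cC (k : ℤ) : ℤ := k * (k - 1) / 2

theorem two_cC (k : ℤ) : 2 * cC k = k * (k - 1) := by
  unfold cC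
  have : (2 : ℤ) ∣ k * (k - 1) := by
    have := Int.even_mul_pred_self k
    exact this.two_dvd
  exact Int.mul_ediv_cancel' this

theorem cC_congr {m : ℕ} (hmo : Odd m) {x y : ℤ} (h : (m : ℤ) ∣ x - y) :
    (m : ℤ) ∣ cC x - cC y := by
  have h2 : (m : ℤ) ∣ 2 * (cC x - cC y) := by
    have : 2 * (cC x - cC y) = (x - y) * (x + y - 1) := by
      rw [mul_sub, two_cC, two_cC]; ring
    rw [this]; exact Dvd.dvd.mul_right h _
  have hc : IsCoprime (m : ℤ) 2 := by
    have : Nat.Coprime m 2 := Nat.coprime_two_right.mpr hmo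
    exact_mod_cast Nat.isCoprime_iff_coprime.mpr this
  exact hc.dvd_of_dvd_mul_left h2

theorem cC_add (x y : ℤ) : cC (x + y) = cC x + x * y + cC y := by
  have h1 := two_cC (x + y)
  have h2 := two_cC x
  have h3 := two_cC y
  linarith

theorem cC_neg (x : ℤ) : cC (-x) = cC x + x := by
  have h1 := two_cC (-x)
  have h2 := two_cC x
  linarith

theorem fV_shift {n m : ℕ} (hn : 0 < n) (k t : ℤ) :
    fV n m (k + n * t) = ((fV n m k).1, (fV n m k).2 + (t : ZMod m)) := by
  unfold fV
  have hn' : (n : ℤ) ≠ 0 := by positivity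
  have : -(k + n * t) / (n : ℤ) = (-k) / n - t := by
    rw [show -(k + n * t) = -k + n * (-t) by ring, Int.add_mul_ediv_left _ _ hn']; ring
  rw [this]
  ext
  · simp
  · push_cast; ring

theorem fV_eq_iff {n m : ℕ} (hn : 0 < n) (k k' : ℤ) :
    fV n m k = fV n m k' ↔ ((n : ℤ) * m) ∣ k - k' := by
  constructor
  · intro h
    have h1 : (n : ℤ) ∣ k - k' := by
      have : (k : ZMod n) = k' := by
        have := congrArg Prod.fst h
        simpa [fV] using this
      rw [← ZMod.intCast_zmod_eq_zero_iff_dvd] at *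
      push_cast
      rw [this, sub_self]
    obtain ⟨t, ht⟩ := h1
    obtain rfl : k = k' + n * t := by linarith
    rw [fV_shift hn] at h
    have h2 := congrArg Prod.snd h
    simp only [add_eq_left] at h2
    rw [ht]
    exact mul_dvd_mul_left _ ((ZMod.intCast_zmod_eq_zero_iff_dvd _ _).1 h2)
  · rintro ⟨t, ht⟩
    obtain rfl : k = k' + n * (m * t) := by linarith
    rw [fV_shift hn]
    ext <;> simp

theorem fV_surj {n m : ℕ} (hn : 0 < n) (v : ZMod n × ZMod m) : ∃ k, fV n m k = v := by
  obtain ⟨i, j⟩ := v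
  obtain ⟨k, hk⟩ := ZMod.intCast_surjective (i - 1)
  obtain ⟨t, ht⟩ := ZMod.intCast_surjective (j - (fV n m k).2)
  refine ⟨k + n * t, ?_⟩
  rw [fV_shift hn, ht]
  ext
  · simp [fV, hk]
  · simp

theorem sig1 {n m : ℕ} (hn : 3 ≤ n) (σ₁ : Equiv.Perm (ZMod n × ZMod m))
    (hσ₁ : ∀ (i : ZMod n) (j : ZMod m),
      σ₁ (i, j) = if i = 1 then (i + 1, j + 1) else (i + 1, j)) (k : ℤ) :
    σ₁ (fV n m k) = fV n m (k + 1) := by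
  have hn0 : 0 < n := by omega
  -- reduce to 0 ≤ r < n
  obtain ⟨r, t, hr0, hrn, rfl⟩ : ∃ r t : ℤ, 0 ≤ r ∧ r < n ∧ k = r + n * t :=
    ⟨k % n, k / n, Int.emod_nonneg _ (by positivity), Int.emod_lt_of_pos _ (by positivity),
      (Int.emod_add_mul_ediv k n).symm⟩
  rw [show r + n * t + 1 = (r + 1) + n * t by ring, fV_shift hn0, fV_shift hn0, hσ₁]
  have h1 : (fV n m r).1 = 1 ↔ r = 0 := by
    simp only [fV, add_eq_right]
    rw [ZMod.intCast_zmod_eq_zero_iff_dvd]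
    constructor
    · intro h; exact Int.eq_zero_of_dvd_of_nonneg_of_lt hr0 hrn h
    · rintro rfl; simp
  have hq : ∀ x : ℤ, 0 < x → x ≤ n → (-x) / (n : ℤ) = -1 := by
    intro x hx hxn
    rw [Int.ediv_eq_iff_of_pos (by positivity)]
    constructor <;> linarith
  by_cases hr : r = 0
  · rw [if_pos (h1.2 hr)]
    subst hr
    have := hq (0 + 1) (by norm_num) (by omega)
    simp only [fV, this]
    ext
    · simp
    · simp; ring
  · rw [if_neg (fun h => hr (h1.1 h))]
    simp only [fV, hq r (by omega) (by omega), hq (r+1) (by omega) (by omega)]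
    ext
    · simp
    · simp

theorem ell_lem {n m : ℕ} (hn : 3 ≤ n) (hmn : m ∣ n) (hmo : Odd m) (k : ℤ) :
    ((ellFun (zrep ((k : ZMod n) + 1)) : ℕ) : ZMod m)
      = ((cC k + (-((-k) / (n : ℤ))) - k / (n : ℤ) : ℤ) : ZMod m) := by
  have hn0 : (0 : ℤ) < n := by omega
  obtain ⟨r, t, hr0, hrn, rfl⟩ : ∃ r t : ℤ, 0 ≤ r ∧ r < n ∧ k = r + n * t :=
    ⟨k % n, k / n, Int.emod_nonneg _ (by positivity), Int.emod_lt_of_pos _ (by positivity),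
      (Int.emod_add_mul_ediv k n).symm⟩
  lift r to ℕ using hr0
  have hrn' : r < n := by exact_mod_cast hrn
  have hz : zrep ((((r : ℤ) + n * t : ℤ) : ZMod n) + 1) = r + 1 := by
    have e : ((((r : ℤ) + n * t : ℤ) : ZMod n) + 1) = ((r + 1 : ℕ) : ZMod n) := by
      push_cast; simp
    rw [e, zrep, ZMod.val_natCast]
    by_cases h : r + 1 = n
    · rw [h]; simp
    · rw [Nat.mod_eq_of_lt (by omega)]; simp
  rw [hz]
  have e1 : (-((r : ℤ) + n * t)) / (n : ℤ) = (-(r : ℤ)) / n - t := by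
    rw [show -((r : ℤ) + n * t) = -r + n * (-t) by ring,
      Int.add_mul_ediv_left _ _ hn0.ne']; ring
  have e2 : ((r : ℤ) + n * t) / (n : ℤ) = t := by
    rw [Int.add_mul_ediv_left _ _ hn0.ne', Int.ediv_eq_zero_of_lt (by positivity) hrn]; ring
  have e3 : ((cC ((r : ℤ) + n * t) : ℤ) : ZMod m) = (cC r : ℤ) := by
    have : (m : ℤ) ∣ cC ((r : ℤ) + n * t) - cC r := by
      apply cC_congr hmo
      have : (m : ℤ) ∣ n := by exact_mod_cast hmn
      simpa using Dvd.dvd.mul_right this t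
    rw [← ZMod.intCast_zmod_eq_zero_iff_dvd] at this
    push_cast at this
    exact sub_eq_zero.1 this
  rw [e1, e2]
  push_cast
  rw [e3]
  rcases Nat.eq_zero_or_pos r with rfl | hr
  · simp [ellFun, cC]
  · have hq : (-(r : ℤ)) / (n : ℤ) = -1 := by
      rw [Int.ediv_eq_iff_of_pos (by positivity)]
      constructor <;> linarith
    have e4 : ((ellFun (r + 1) : ℕ) : ℤ) = 1 + cC r := by
      obtain ⟨q, rfl⟩ : ∃ q, r = q + 1 := ⟨r - 1, by omega⟩
      simp only [ellFun, cC]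
      rw [if_neg (by omega)]
      simp only [Nat.add_sub_cancel, show q + 1 + 1 - 2 = q by omega]
      push_cast
      rw [mul_comm]
      simp
    rw [hq]
    have := congrArg (Int.cast : ℤ → ZMod m) e4
    push_cast at this ⊢
    rw [this]
    ring

theorem sig2 {n m : ℕ} (hn : 3 ≤ n) (hmn : m ∣ n) (hmo : Odd m)
    (σ₂ : Equiv.Perm (ZMod n × ZMod m))
    (hσ₂ : ∀ (i : ZMod n) (j : ZMod m),
      σ₂ (i, j) = (2 - i, 2 - j + (ellFun (zrep i) : ZMod m))) (k : ℤ) :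
    σ₂ (fV n m k) = fV n m (-k + n * (2 + cC k)) := by
  rw [fV_shift (by omega)]
  have := ell_lem hn hmn hmo k
  simp only [fV, hσ₂, this]
  ext
  · push_cast; ring
  · push_cast; simp; ring

theorem grp_form {n m : ℕ} (hn : 3 ≤ n) (hmn : m ∣ n) (hmo : Odd m)
    (σ₁ σ₂ : Equiv.Perm (ZMod n × ZMod m))
    (h1 : ∀ k, σ₁ (fV n m k) = fV n m (k + 1))
    (h2 : ∀ k, σ₂ (fV n m k) = fV n m (-k + n * (2 + cC k)))
    (g : Equiv.Perm (ZMod n × ZMod m)) (hg : g ∈ Subgroup.closure {σ₁, σ₂}) :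
    ∃ a b : ℤ, (∀ k, g (fV n m k) = fV n m (k + a + n * (b * k))) ∨
      (∀ k, g (fV n m k) = fV n m (-k + a + n * (b * k + cC k))) := by
  have hn0 : 0 < n := by omega
  have hm0 : 0 < m := hmo.pos
  have hmn' : (m : ℤ) ∣ n := by exact_mod_cast hmn
  have : NeZero n := ⟨by omega⟩
  have : NeZero m := ⟨by omega⟩
  rw [← Subgroup.mem_toSubmonoid, Subgroup.closure_toSubmonoid_of_finite] at hg
  induction hg using Submonoid.closure_induction_left with
  | one => exact ⟨0, 0, Or.inl fun k => by simp⟩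
  | mul_left x hx y _ ih =>
    obtain ⟨a, b, ih⟩ := ih
    rcases hx with rfl | hx
    · refine ⟨a + 1, b, ?_⟩
      rcases ih with ih | ih
      · left; intro k; rw [Equiv.Perm.mul_apply, ih, h1]; congr 1; ring
      · right; intro k; rw [Equiv.Perm.mul_apply, ih, h1]; congr 1; ring
    · obtain rfl : x = σ₂ := hx
      rcases ih with ih | ih
      · refine ⟨-a + 2 * n + n * cC a, -b + a, Or.inr fun k => ?_⟩
        rw [Equiv.Perm.mul_apply, ih, h2, fV_eq_iff hn0]
        have hc : (m : ℤ) ∣ cC (k + a + n * (b * k)) - cC (k + a) := by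
          apply cC_congr hmo
          rw [add_sub_cancel_left]
          exact Dvd.dvd.mul_right hmn' _
        rw [cC_add k a] at hc
        refine dvd_conv (mul_dvd_mul_left (n : ℤ) hc) ?_
        ring
      · refine ⟨-a + 2 * n + n * cC a, -b - a + 1, Or.inl fun k => ?_⟩
        rw [Equiv.Perm.mul_apply, ih, h2, fV_eq_iff hn0]
        have hc : (m : ℤ) ∣ cC (-k + a + n * (b * k + cC k)) - cC (-k + a) := by
          apply cC_congr hmo
          rw [add_sub_cancel_left]
          exact Dvd.dvd.mul_right hmn' _
        rw [cC_add (-k) a, cC_neg] at hc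
        refine dvd_conv (mul_dvd_mul_left (n : ℤ) hc) ?_
        ring

theorem ex_trans {n m : ℕ} (hn : 3 ≤ n) (hmn : m ∣ n) (hmo : Odd m)
    (σ₁ σ₂ : Equiv.Perm (ZMod n × ZMod m))
    (h1 : ∀ k, σ₁ (fV n m k) = fV n m (k + 1))
    (h2 : ∀ k, σ₂ (fV n m k) = fV n m (-k + n * (2 + cC k))) (a b : ℤ) :
    ∃ g ∈ Subgroup.closure {σ₁, σ₂}, ∀ k, g (fV n m k) = fV n m (k + a + n * (b * k)) := by
  have hn0 : 0 < n := by omega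
  have hmn' : (m : ℤ) ∣ n := by exact_mod_cast hmn
  have m1 : σ₁ ∈ Subgroup.closure {σ₁, σ₂} := Subgroup.subset_closure (by simp)
  have m2 : σ₂ ∈ Subgroup.closure {σ₁, σ₂} := Subgroup.subset_closure (by simp)
  have ht : ∀ k, (σ₂ * σ₂) (fV n m k) = fV n m (k + n * k) := by
    intro k
    rw [Equiv.Perm.mul_apply, h2, h2, fV_eq_iff hn0]
    have hc : (m : ℤ) ∣ cC (-k + n * (2 + cC k)) - cC (-k) := by
      apply cC_congr hmo
      rw [add_sub_cancel_left]
      exact Dvd.dvd.mul_right hmn' _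
    rw [cC_neg] at hc
    refine dvd_conv (mul_dvd_mul_left (n : ℤ) hc) ?_
    ring
  have hnn : ∀ x : ℤ, (n : ℤ) * m ∣ n * (n * x) := fun x =>
    mul_dvd_mul_left _ (Dvd.dvd.mul_right hmn' _)
  have mt := mul_mem m2 m2
  generalize σ₂ * σ₂ = τ at ht mt
  have hb : ∃ g ∈ Subgroup.closure {σ₁, σ₂}, ∀ k, g (fV n m k) = fV n m (k + n * (b * k)) := by
    induction b using Int.induction_on with
    | zero => exact ⟨1, one_mem _, fun k => by simp⟩
    | succ i ih =>
      obtain ⟨g, hg, ih⟩ := ih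
      refine ⟨τ * g, mul_mem mt hg, fun k => ?_⟩
      rw [Equiv.Perm.mul_apply, ih, ht, fV_eq_iff hn0]
      refine dvd_conv (hnn (i * k)) ?_
      ring
    | pred i ih =>
      obtain ⟨g, hg, ih⟩ := ih
      refine ⟨τ⁻¹ * g, mul_mem (inv_mem mt) hg, fun k => ?_⟩
      rw [Equiv.Perm.mul_apply, ih, Equiv.Perm.inv_eq_iff_eq, ht, fV_eq_iff hn0]
      refine dvd_conv (hnn ((i + 1) * k)) ?_
      ring
  obtain ⟨g₀, hg₀, hb⟩ := hb
  induction a using Int.induction_on with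
  | zero => exact ⟨g₀, hg₀, fun k => by simpa using hb k⟩
  | succ i ih =>
    obtain ⟨g, hg, ih⟩ := ih
    refine ⟨σ₁ * g, mul_mem m1 hg, fun k => ?_⟩
    rw [Equiv.Perm.mul_apply, ih, h1]
    congr 1; ring
  | pred i ih =>
    obtain ⟨g, hg, ih⟩ := ih
    refine ⟨σ₁⁻¹ * g, mul_mem (inv_mem m1) hg, fun k => ?_⟩
    rw [Equiv.Perm.mul_apply, ih, Equiv.Perm.inv_eq_iff_eq, h1]
    congr 1; ring

theorem adj_form {n m : ℕ} (k k' : ℤ)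
    (h : (lexCycle n m).Adj (fV n m k) (fV n m k')) :
    ∃ t : ℤ, k' = k + 1 + n * t ∨ k' = k - 1 + n * t := by
  rw [lexCycle, SimpleGraph.fromRel_adj] at h
  rcases h.2 with h | h
  · have : (n : ℤ) ∣ k' - (k + 1) := by
      rw [← ZMod.intCast_zmod_eq_zero_iff_dvd]
      simp only [fV, add_left_inj] at h
      push_cast; rw [h]; ring
    obtain ⟨t, ht⟩ := this
    exact ⟨t, Or.inl (by linarith)⟩
  · have : (n : ℤ) ∣ k' - (k - 1) := by
      rw [← ZMod.intCast_zmod_eq_zero_iff_dvd]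
      simp only [fV, add_left_inj] at h
      push_cast; rw [h]; ring
    obtain ⟨t, ht⟩ := this
    exact ⟨t, Or.inr (by linarith)⟩

theorem base_arc {n m : ℕ} (hn : 3 ≤ n) (hmn : m ∣ n) (hmo : Odd m)
    (σ₁ σ₂ : Equiv.Perm (ZMod n × ZMod m))
    (h1 : ∀ k, σ₁ (fV n m k) = fV n m (k + 1))
    (h2 : ∀ k, σ₂ (fV n m k) = fV n m (-k + n * (2 + cC k)))
    (u w : ZMod n × ZMod m) (h : (lexCycle n m).Adj u w) :
    ∃ g ∈ Subgroup.closure {σ₁, σ₂}, g (fV n m 0) = u ∧ g (fV n m 1) = w := by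
  have hn0 : 0 < n := by omega
  have hmn' : (m : ℤ) ∣ n := by exact_mod_cast hmn
  have m2 : σ₂ ∈ Subgroup.closure {σ₁, σ₂} := Subgroup.subset_closure (by simp)
  have hnn : ∀ x : ℤ, (n : ℤ) * m ∣ n * (n * x) := fun x =>
    mul_dvd_mul_left _ (Dvd.dvd.mul_right hmn' _)
  obtain ⟨k, rfl⟩ := fV_surj hn0 u
  obtain ⟨k', rfl⟩ := fV_surj hn0 w
  obtain ⟨t, rfl | rfl⟩ := adj_form k k' h
  · obtain ⟨g, hg, hgf⟩ := ex_trans hn hmn hmo σ₁ σ₂ h1 h2 k t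
    refine ⟨g, hg, ?_, ?_⟩
    · rw [hgf]; simp
    · rw [hgf]; congr 1; ring
  · obtain ⟨g, hg, hgf⟩ := ex_trans hn hmn hmo σ₁ σ₂ h1 h2 (k - 2 * n) (-t)
    have c0 : cC 0 = 0 := by simp [cC]
    have c1 : cC 1 = 0 := by simp [cC]
    refine ⟨g * σ₂, mul_mem hg m2, ?_, ?_⟩
    · rw [Equiv.Perm.mul_apply, h2, hgf, c0, fV_eq_iff hn0]
      refine dvd_conv (hnn (-t * 2)) ?_; ring
    · rw [Equiv.Perm.mul_apply, h2, hgf, c1, fV_eq_iff hn0]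
      refine dvd_conv (hnn (-t * 2)) ?_; ring

theorem statement4
    (m s n : ℕ) (hm : 3 ≤ m) (hmo : Odd m) (hs : 0 < s) (hn : n = s * m)
    (σ₁ σ₂ : Equiv.Perm (ZMod n × ZMod m))
    (hσ₁ : ∀ (i : ZMod n) (j : ZMod m),
      σ₁ (i, j) = if i = 1 then (i + 1, j + 1) else (i + 1, j))
    (hσ₂ : ∀ (i : ZMod n) (j : ZMod m),
      σ₂ (i, j) = (2 - i, 2 - j + (ellFun (zrep i) : ZMod m)))
    :
    (∀ u₁ w₁ u₂ w₂ : ZMod n × ZMod m,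
        (lexCycle n m).Adj u₁ w₁ → (lexCycle n m).Adj u₂ w₂ →
        ∃ g ∈ Subgroup.closure {σ₁, σ₂}, g u₁ = u₂ ∧ g w₁ = w₂) ∧
      (∀ u w : ZMod n × ZMod m, (lexCycle n m).Adj u w →
        ∀ g ∈ Subgroup.closure {σ₁, σ₂}, g u = u → g w = w → g = 1) := by
  have hm0 : 0 < m := by omega
  have hn3 : 3 ≤ n := by rw [hn]; nlinarith
  have hn0 : 0 < n := by omega
  have hmn : m ∣ n := ⟨s, by rw [hn, mul_comm]⟩
  have hmn' : (m : ℤ) ∣ n := by exact_mod_cast hmn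
  have h1 := sig1 hn3 σ₁ hσ₁
  have h2 := sig2 hn3 hmn hmo σ₂ hσ₂
  refine ⟨?_, ?_⟩
  · intro u₁ w₁ u₂ w₂ ha hb
    obtain ⟨g, hg, rfl, rfl⟩ := base_arc hn3 hmn hmo σ₁ σ₂ h1 h2 u₁ w₁ ha
    obtain ⟨g', hg', rfl, rfl⟩ := base_arc hn3 hmn hmo σ₁ σ₂ h1 h2 u₂ w₂ hb
    exact ⟨g' * g⁻¹, mul_mem hg' (inv_mem hg), by simp, by simp⟩
  · intro u w ha g hg hu hw
    obtain ⟨k, rfl⟩ := fV_surj hn0 u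
    obtain ⟨k', rfl⟩ := fV_surj hn0 w
    have hk := adj_form k k' ha
    obtain ⟨a, b, hf | hf⟩ := grp_form hn3 hmn hmo σ₁ σ₂ h1 h2 g hg
    · rw [hf, fV_eq_iff hn0] at hu hw
      have d1 : (n : ℤ) * m ∣ n * (b * (k' - k)) := by
        refine dvd_conv (dvd_sub hw hu) ?_; ring
      have d2 : (m : ℤ) ∣ b * (k' - k) :=
        Int.dvd_of_mul_dvd_mul_left (by omega) d1
      have d3 : (m : ℤ) ∣ b := by
        obtain ⟨t, rfl | rfl⟩ := hk
        · have := dvd_sub d2 (hmn'.mul_right (b * t))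
          refine dvd_conv (this) ?_; ring
        · have := dvd_sub (hmn'.mul_right (b * t)) d2
          refine dvd_conv (this) ?_; ring
      have d4 : ∀ x, (n : ℤ) * m ∣ n * (b * x) := fun x =>
        mul_dvd_mul_left _ (d3.mul_right x)
      have d5 : (n : ℤ) * m ∣ a := by
        refine dvd_conv (dvd_sub hu (d4 k)) ?_; ring
      ext1 v
      obtain ⟨x, rfl⟩ := fV_surj hn0 v
      rw [hf, Equiv.Perm.one_apply, fV_eq_iff hn0]
      refine dvd_conv (dvd_add d5 (d4 x)) ?_; ring
    · exfalso
      rw [hf, fV_eq_iff hn0] at hu hw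
      have d1 := dvd_of_mul_right_dvd hu
      have d2 := dvd_of_mul_right_dvd hw
      have d3 : (n : ℤ) ∣ 2 := by
        have d := dvd_sub d1 d2
        obtain ⟨t, rfl | rfl⟩ := hk
        · have := dvd_sub d (Dvd.intro (b * k + cC k - b * (k + 1 + n * t)
            - cC (k + 1 + n * t) + 2 * t) rfl)
          refine dvd_conv (this) ?_; ring
        · have := dvd_sub (Dvd.intro (b * k + cC k - b * (k - 1 + n * t)
            - cC (k - 1 + n * t) + 2 * t) rfl) d
          refine dvd_conv (this) ?_; ring
      have := Int.le_of_dvd (by norm_num) d3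
      omega
end

section
/- The orbit of the vertex (1,1) under the cyclic group ⟨σ₁⟩ is the entire vertex set of Γ; equivalently, σ₁ permutes all m·n vertices of Γ in a single cycle (so the corresponding facial cycle is a Hamiltonian cycle of Γ). -/
theorem statement5
    (m s n : ℕ) (hm : 3 ≤ m) (hmo : Odd m) (hs : 0 < s) (hn : n = s * m)
    (σ₁ : Equiv.Perm (ZMod n × ZMod m))
    (hσ₁ : ∀ (i : ZMod n) (j : ZMod m),
      σ₁ (i, j) = if i = 1 then (i + 1, j + 1) else (i + 1, j))
    :
    ∀ x : ZMod n × ZMod m, ∃ k : ℕ, (σ₁ ^ k) ((1, 1) : ZMod n × ZMod m) = x := by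
  have hn0 : 0 < n := by subst hn; positivity
  haveI : NeZero n := ⟨hn0.ne'⟩
  haveI : NeZero m := ⟨by omega⟩
  have step : ∀ r : ℕ, r < n → ∀ j : ZMod m,
      (σ₁ ^ (r + 1)) ((1, j) : ZMod n × ZMod m) = (2 + (r : ZMod n), j + 1) := by
    intro r
    induction r with
    | zero =>
      intro _ j
      simp [hσ₁]
      norm_num
    | succ r ih =>
      intro hr j
      rw [pow_succ', Equiv.Perm.mul_apply, ih (by omega) j, hσ₁, if_neg]
      · push_cast
        rw [add_assoc]
      · intro h
        have h2 : ((r + 1 : ℕ) : ZMod n) = 0 := by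
          push_cast
          linear_combination h
        rw [ZMod.natCast_eq_zero_iff] at h2
        exact absurd (Nat.le_of_dvd (by omega) h2) (by omega)
  have full : ∀ j : ZMod m, (σ₁ ^ n) ((1, j) : ZMod n × ZMod m) = (1, j + 1) := by
    intro j
    have h := step (n - 1) (by omega) j
    rw [Nat.sub_add_cancel hn0] at h
    rw [h, Nat.cast_sub hn0]
    simp
    norm_num
  have many : ∀ (q : ℕ) (j : ZMod m),
      (σ₁ ^ (n * q)) ((1, j) : ZMod n × ZMod m) = (1, j + q) := by
    intro q
    induction q with
    | zero => intro j; simp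
    | succ q ih =>
      intro j
      rw [Nat.mul_succ, pow_add, Equiv.Perm.mul_apply, full, ih]
      push_cast
      congr 1
      ring
  rintro ⟨i, j⟩
  refine ⟨((i - 2).val + 1) + n * (j - 2).val, ?_⟩
  rw [pow_add, Equiv.Perm.mul_apply, many, step _ (ZMod.val_lt _)]
  simp only [ZMod.natCast_val, ZMod.cast_id', id]
  ext
  · simp
  · simp only
    ring
end

section
/- There exists no involutory automorphism ρ of Γ that fixes the vertex (1,1) and satisfies ρ⁻¹σ₁ρ = σ₁⁻¹ and ρ⁻¹σ₂ρ = σ₂⁻¹. (This is the key step showing that the associated rotary map of type {mn, 2m} is chiral.) -/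
theorem statement6
    (m s n : ℕ) (hm : 3 ≤ m) (hmo : Odd m) (hs : 0 < s) (hn : n = s * m)
    (σ₁ σ₂ : Equiv.Perm (ZMod n × ZMod m))
    (hσ₁ : ∀ (i : ZMod n) (j : ZMod m),
      σ₁ (i, j) = if i = 1 then (i + 1, j + 1) else (i + 1, j))
    (hσ₂ : ∀ (i : ZMod n) (j : ZMod m),
      σ₂ (i, j) = (2 - i, 2 - j + (ellFun (zrep i) : ZMod m)))
    :
    ¬ ∃ ρ : Equiv.Perm (ZMod n × ZMod m),
      (∀ u v : ZMod n × ZMod m, (lexCycle n m).Adj (ρ u) (ρ v) ↔ (lexCycle n m).Adj u v) ∧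
      ρ * ρ = 1 ∧ ρ ((1, 1) : ZMod n × ZMod m) = (1, 1) ∧
      ρ * σ₁ * ρ = σ₁⁻¹ ∧ ρ * σ₂ * ρ = σ₂⁻¹ := by
  rintro ⟨ρ, -, hρ, hfix, h1, h2⟩
  have hn3 : 3 ≤ n := by
    rw [hn]; nlinarith
  have hn1 : Fact (1 < n) := ⟨by omega⟩
  have hm1 : Fact (1 < m) := ⟨by omega⟩
  have hcast : ∀ k : ℕ, 0 < k → k < n → ((k : ℕ) : ZMod n) ≠ 0 := by
    intro k hk hkn h
    rw [ZMod.natCast_eq_zero_iff] at h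
    exact absurd (Nat.le_of_dvd hk h) (by omega)
  have two_ne : (2 : ZMod n) ≠ 0 := by
    have := hcast 2 (by omega) (by omega)
    exact_mod_cast this
  have hne : ∀ (i : ZMod n) (j : ZMod m), i ≠ 1 → σ₁ (i, j) = (i + 1, j) := by
    intro i j h
    rw [hσ₁, if_neg h]
  have hone : ∀ (j : ZMod m), σ₁ (1, j) = (2, j + 1) := by
    intro j
    rw [hσ₁, if_pos rfl, one_add_one_eq_two]
  have hρρ : ∀ x, ρ (ρ x) = x := fun x => by
    have := congrArg (fun f => f x) hρ
    simpa using this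
  have hc1 : ∀ x, σ₁ (ρ (σ₁ x)) = ρ x := fun x => by
    have := congrArg (fun f => σ₁ (f (ρ x))) h1
    simpa [hρρ] using this
  have hc2 : ∀ x, σ₂ (ρ (σ₂ x)) = ρ x := fun x => by
    have := congrArg (fun f => σ₂ (f (ρ x))) h2
    simpa [hρρ] using this
  have hpow : ∀ (k : ℕ) x, (σ₁ ^ k) (ρ ((σ₁ ^ k) x)) = ρ x := by
    intro k
    induction k with
    | zero => intro x; simp
    | succ k ih =>
      intro x
      have e1 : ∀ y, (σ₁ ^ (k + 1)) y = (σ₁ ^ k) (σ₁ y) := fun y => by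
        rw [pow_succ, Equiv.Perm.mul_apply]
      have e2 : ∀ y, (σ₁ ^ (k + 1)) y = σ₁ ((σ₁ ^ k) y) := fun y => by
        rw [pow_succ', Equiv.Perm.mul_apply]
      rw [e2 x, e1, hc1, ih]
  have hwalk : ∀ (k : ℕ) (j : ZMod m), k < n → (σ₁ ^ k) (2, j) = (2 + (k : ZMod n), j) := by
    intro k j
    induction k with
    | zero => intro _; simp
    | succ k ih =>
      intro hk
      rw [pow_succ', Equiv.Perm.mul_apply, ih (by omega), hne]
      · push_cast; rw [add_assoc]
      · intro h
        apply hcast (k + 1) (by omega) hk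
        push_cast
        linear_combination h
  have hn2 : ∀ j : ZMod m, (σ₁ ^ n) (2, j) = (2, j + 1) := by
    intro j
    obtain ⟨k, rfl⟩ : ∃ k, n = k + 1 := ⟨n - 1, by omega⟩
    rw [pow_succ', Equiv.Perm.mul_apply, hwalk k j (by omega)]
    have : (2 + (k : ZMod (k + 1))) = 1 := by
      have := ZMod.natCast_self (k + 1)
      push_cast at this
      linear_combination this
    rw [this, hone]
  have hτ : ∀ (k : ℕ) (j : ZMod m), k < n →
      (σ₁ ^ n) (2 + (k : ZMod n), j) = (2 + (k : ZMod n), j + 1) := by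
    intro k j hk
    rw [← hwalk k j hk, ← hwalk k (j + 1) hk, ← hn2, ← Equiv.Perm.mul_apply,
      ← Equiv.Perm.mul_apply, ← pow_add, ← pow_add, add_comm]
  have t3 : ∀ j : ZMod m, (σ₁ ^ n) (3, j) = (3, j + 1) := by
    intro j
    have h := hτ 1 j (by omega)
    have e : (2 + ((1 : ℕ) : ZMod n)) = 3 := by push_cast; norm_num
    rwa [e] at h
  have tm : ∀ j : ZMod m, (σ₁ ^ n) (-1, j) = (-1, j + 1) := by
    intro j
    have h := hτ (n - 3) j (by omega)
    have e : (2 + ((n - 3 : ℕ) : ZMod n)) = -1 := by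
      rw [Nat.cast_sub hn3, ZMod.natCast_self]; push_cast; ring
    rwa [e] at h
  have r2 : ρ (2, 2) = (0, 1) := by
    apply σ₁.injective
    have h := hc1 (1, 1)
    rw [hone, one_add_one_eq_two, hfix] at h
    rw [h, hne _ _ zero_ne_one, zero_add]
  have r3 : ρ (3, 2) = (-1, 1) := by
    apply σ₁.injective
    have h := hc1 (2, 2)
    rw [hne 2 2 (fun h => one_ne_zero (α := ZMod n) (by linear_combination h)), r2,
      two_add_one_eq_three] at h
    rw [h, hne _ _ (fun h => two_ne (by linear_combination -h)), neg_add_cancel]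
  have r4 : ρ (-1, 1) = (3, 2) := by rw [← r3, hρρ]
  have r5 : ρ (-1, 2) = (3, 1) := by
    apply (σ₁ ^ n).injective
    have h := hpow n (-1, 1)
    rw [tm, one_add_one_eq_two, r4] at h
    rw [h, t3, one_add_one_eq_two]
  have z3 : zrep (3 : ZMod n) = 3 := by
    unfold zrep
    rcases Nat.lt_or_ge 3 n with h | h
    · have : (3 : ZMod n).val = 3 := by
        have := ZMod.val_natCast_of_lt h
        exact_mod_cast this
      simp [this]
    · obtain rfl : n = 3 := by omega
      rfl
  have s3 : ∀ j, σ₂ (3, j) = (-1, 4 - j) := by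
    intro j
    rw [hσ₂, z3]
    have : ellFun 3 = 2 := rfl
    rw [this]
    ext
    · norm_num
    · push_cast; ring
  have h := hc2 (3, 2)
  rw [s3, r3, show (4 : ZMod m) - 2 = 2 by norm_num, r5, s3] at h
  have h' := congrArg Prod.snd h
  simp only at h'
  have h2 : ((2 : ℕ) : ZMod m) = 0 := by push_cast; linear_combination h'
  rw [ZMod.natCast_eq_zero_iff] at h2
  exact absurd (Nat.le_of_dvd (by omega) h2) (by omega)
end

section
/- The permutations σ₁ and σ₂ satisfy σ₂⁻²σ₁σ₂² = σ₁^{n+1}; in particular, the conjugate of σ₁ by σ₂² lies in the cyclic group ⟨σ₁⟩. -/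
theorem two_mul_ell (m n : ℕ) (hn : 3 ≤ n) (hd : m ∣ n) (a : ZMod n) :
    (2 : ZMod m) * (ellFun (zrep a) : ZMod m) =
      if a = 1 then 0 else 2 + (ZMod.castHom hd (ZMod m) a - 2) * (ZMod.castHom hd (ZMod m) a - 1) := by
  haveI : NeZero n := ⟨by omega⟩
  haveI : Fact (1 < n) := ⟨by omega⟩
  have h0 : ((zrep a : ℕ) : ZMod n) = a := by
    unfold zrep
    split_ifs with h
    · rw [ZMod.natCast_self]; exact ((ZMod.val_eq_zero a).1 h).symm
    · exact ZMod.natCast_zmod_val a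
  have h1 : 1 ≤ zrep a := by unfold zrep; split_ifs <;> omega
  have hc : ZMod.castHom hd (ZMod m) a = ((zrep a : ℕ) : ZMod m) := by
    conv_lhs => rw [← h0]
    rw [map_natCast]
  have hiff : a = 1 ↔ zrep a = 1 := by
    constructor
    · intro h
      subst h
      unfold zrep
      rw [ZMod.val_one]; simp
    · intro h
      rw [← h0, h]; simp
  rw [hc]
  unfold ellFun
  by_cases h : zrep a = 1
  · rw [if_pos h, if_pos (hiff.2 h)]; simp
  · rw [if_neg h, if_neg (fun h' => h (hiff.1 h'))]
    obtain ⟨k, hk⟩ : ∃ k, zrep a = k + 2 := ⟨zrep a - 2, by omega⟩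
    rw [hk]
    have e : k + 2 - 2 = k := by omega
    have e' : k + 2 - 1 = k + 1 := by omega
    rw [e, e']
    have h2 : 2 * (k * (k + 1) / 2) = k * (k + 1) :=
      Nat.mul_div_cancel' (Nat.even_mul_succ_self k).two_dvd
    have h3 := congrArg (Nat.cast : ℕ → ZMod m) h2
    rw [Nat.cast_mul, Nat.cast_mul] at h3
    push_cast at h3 ⊢
    linear_combination h3

theorem statement7
    (m s n : ℕ) (hm : 3 ≤ m) (hmo : Odd m) (hs : 0 < s) (hn : n = s * m)
    (σ₁ σ₂ : Equiv.Perm (ZMod n × ZMod m))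
    (hσ₁ : ∀ (i : ZMod n) (j : ZMod m),
      σ₁ (i, j) = if i = 1 then (i + 1, j + 1) else (i + 1, j))
    (hσ₂ : ∀ (i : ZMod n) (j : ZMod m),
      σ₂ (i, j) = (2 - i, 2 - j + (ellFun (zrep i) : ZMod m)))
    :
    σ₂ ^ 2 * σ₁ * (σ₂ ^ 2)⁻¹ = σ₁ ^ (n + 1) ∧
      σ₂ ^ 2 * σ₁ * (σ₂ ^ 2)⁻¹ ∈ Subgroup.zpowers σ₁ := by
  have hn3 : 3 ≤ n := by rw [hn]; nlinarith
  have hd : m ∣ n := ⟨s, by rw [hn, mul_comm]⟩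
  haveI : NeZero n := ⟨by omega⟩
  have hu : IsUnit (2 : ZMod m) := by
    have := (ZMod.isUnit_iff_coprime 2 m).2 ((Nat.coprime_two_left).2 hmo)
    simpa using this
  have hsq : ∀ i j, (σ₂ ^ 2) (i, j) = (i, j + (ZMod.castHom hd (ZMod m) i - 1)) := by
    intro i j
    rw [pow_two, Equiv.Perm.mul_apply, hσ₂, hσ₂]
    have e1 := two_mul_ell m n hn3 hd i
    have e2 := two_mul_ell m n hn3 hd (2 - i)
    refine Prod.ext (by simp) ?_
    apply hu.mul_left_cancel
    have hiff : (2 - i = 1) ↔ i = 1 := by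
      constructor <;> intro h <;> linear_combination -h
    by_cases h : i = 1
    · rw [if_pos h] at e1
      rw [if_pos (hiff.2 h)] at e2
      have : ZMod.castHom hd (ZMod m) i = 1 := by rw [h, map_one]
      rw [this]
      linear_combination e2 - e1
    · rw [if_neg h] at e1
      rw [if_neg (fun h' => h (hiff.1 h'))] at e2
      rw [map_sub, map_ofNat] at e2
      linear_combination e2 - e1
  have hk : ∀ k : ℕ, k < n → ∀ j, (σ₁ ^ (k + 1)) (1, j) = (1 + ((k + 1 : ℕ) : ZMod n), j + 1) := by
    intro k
    induction k with
    | zero => intro _ j; simp [hσ₁]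
    | succ k ih =>
      intro hk j
      rw [pow_succ', Equiv.Perm.mul_apply, ih (by omega), hσ₁, if_neg]
      · push_cast; ring_nf
      · intro h
        have h' : ((k + 1 : ℕ) : ZMod n) = 0 := by linear_combination h
        rw [ZMod.natCast_eq_zero_iff] at h'
        exact absurd (Nat.le_of_dvd (by omega) h') (by omega)
  have hN1 : ∀ j, (σ₁ ^ n) (1, j) = (1, j + 1) := by
    intro j
    have := hk (n - 1) (by omega) j
    rw [show n - 1 + 1 = n by omega] at this
    simpa using this
  have hN : ∀ i j, (σ₁ ^ n) (i, j) = (i, j + 1) := by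
    intro i j
    obtain ⟨k, hkn, hki⟩ : ∃ k : ℕ, k < n ∧ i = 1 + ((k + 1 : ℕ) : ZMod n) :=
      ⟨(i - 2).val, ZMod.val_lt _, by push_cast; rw [ZMod.natCast_zmod_val]; ring⟩
    have e := hk k hkn (j - 1)
    rw [sub_add_cancel, ← hki] at e
    rw [← e, ← Equiv.Perm.mul_apply, ← pow_add, add_comm, pow_add, Equiv.Perm.mul_apply, hN1,
      hk k hkn, ← hki]
    simp
  have main : σ₂ ^ 2 * σ₁ * (σ₂ ^ 2)⁻¹ = σ₁ ^ (n + 1) := by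
    rw [mul_inv_eq_iff_eq_mul]
    ext1 ⟨i, j⟩
    rw [Equiv.Perm.mul_apply, Equiv.Perm.mul_apply, hsq i j, pow_succ σ₁ n, Equiv.Perm.mul_apply,
      hσ₁ i j, hσ₁ i (j + _)]
    by_cases h : i = 1
    · rw [if_pos h, if_pos h, hsq, hN, map_add, map_one]
      refine Prod.ext rfl ?_
      ring
    · rw [if_neg h, if_neg h, hsq, hN, map_add, map_one]
      refine Prod.ext rfl ?_
      ring
  exact ⟨main, main ▸ Subgroup.npow_mem_zpowers σ₁ (n + 1)⟩
end

section
/- The permutation σ₁ has order 2n, the permutation σ₂ has order 2m, the product σ₁σ₂ has order 2, and the subgroup G = ⟨σ₁, σ₂⟩ of the automorphism group of Γ has order 4m²n. -/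
/-- sign as an element of `ZMod k` -/
def sg8 (k : ℕ) (e : ℤˣ) : ZMod k := ((e : ℤ) : ZMod k)

lemma sg8_sq (k : ℕ) (e : ℤˣ) : sg8 k e * sg8 k e = 1 := by
  rcases Int.units_eq_one_or e with rfl | rfl <;> simp [sg8]

lemma sg8_mul (k : ℕ) (e d : ℤˣ) : sg8 k (e * d) = sg8 k e * sg8 k d := by
  simp [sg8]

lemma sg8_one (k : ℕ) : sg8 k 1 = 1 := by simp [sg8]

lemma sg8_neg_one (k : ℕ) : sg8 k (-1) = -1 := by simp [sg8]

lemma sg8_inj {k : ℕ} (hk : 3 ≤ k) {e d : ℤˣ} (h : sg8 k e = sg8 k d) : e = d := by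
  have : Fact (2 < k) := ⟨by omega⟩
  have h1 : (-1 : ZMod k) ≠ 1 := ZMod.neg_one_ne_one
  rcases Int.units_eq_one_or e with rfl | rfl <;> rcases Int.units_eq_one_or d with rfl | rfl
  · rfl
  · rw [sg8_one, sg8_neg_one] at h; exact absurd h.symm h1
  · rw [sg8_one, sg8_neg_one] at h; exact absurd h h1
  · rfl

/-- the affine permutations -/
def aff8 {n m : ℕ} (p : ZMod n →+* ZMod m) (e d : ℤˣ) (a : ZMod n) (b c : ZMod m) :
    Equiv.Perm (ZMod n × ZMod m) where
  toFun x := (sg8 n e * x.1 + a, sg8 m d * x.2 + b + c * p x.1)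
  invFun x := (sg8 n e * (x.1 - a), sg8 m d * (x.2 - b - c * p (sg8 n e * (x.1 - a))))
  left_inv x := by
    have h1 := sg8_sq n e
    have h2 := sg8_sq m d
    have h3 : sg8 n e * (sg8 n e * x.1 + a - a) = x.1 := by linear_combination x.1 * h1
    ext
    · exact h3
    · simp only [h3]; linear_combination x.2 * h2
  right_inv x := by
    have h1 := sg8_sq n e
    have h2 := sg8_sq m d
    ext
    · simp only; linear_combination (x.1 - a) * h1
    · simp only; linear_combination (x.2 - b - c * p (sg8 n e * (x.1 - a))) * h2

lemma map_sg8 {n m : ℕ} (p : ZMod n →+* ZMod m) (e : ℤˣ) : p (sg8 n e) = sg8 m e := by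
  simp [sg8]

lemma aff8_apply {n m : ℕ} (p : ZMod n →+* ZMod m) (e d : ℤˣ) (a : ZMod n) (b c : ZMod m)
    (i : ZMod n) (k : ZMod m) : aff8 p e d a b c (i, k) =
      (sg8 n e * i + a, sg8 m d * k + b + c * p i) := rfl

lemma aff8_mul {n m : ℕ} (p : ZMod n →+* ZMod m) (e d e' d' : ℤˣ) (a a' : ZMod n)
    (b c b' c' : ZMod m) : aff8 p e d a b c * aff8 p e' d' a' b' c' =
      aff8 p (e * e') (d * d') (sg8 n e * a' + a) (sg8 m d * b' + b + c * p a')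
        (sg8 m d * c' + c * sg8 m e') := by
  ext ⟨i, k⟩
  · simp only [Equiv.Perm.mul_apply, aff8_apply, sg8_mul]; ring
  · simp only [Equiv.Perm.mul_apply, aff8_apply, sg8_mul, map_add, map_mul, map_sg8]; ring

lemma aff8_one {n m : ℕ} (p : ZMod n →+* ZMod m) : aff8 p 1 1 0 0 0 = 1 := by
  ext ⟨i, k⟩ <;> simp [aff8_apply, sg8_one]

lemma aff8_inj {n m : ℕ} (hn : 3 ≤ n) (hm : 3 ≤ m) (p : ZMod n →+* ZMod m) {e d e' d' : ℤˣ}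
    {a a' : ZMod n} {b c b' c' : ZMod m} (h : aff8 p e d a b c = aff8 p e' d' a' b' c') :
    e = e' ∧ d = d' ∧ a = a' ∧ b = b' ∧ c = c' := by
  have h0 := congrArg (fun f => f (0, 0)) h
  have h1 := congrArg (fun f => f (1, 0)) h
  have h2 := congrArg (fun f => f (0, 1)) h
  simp only [aff8_apply, Prod.mk.injEq, map_zero, map_one, mul_zero, mul_one, zero_add,
    add_zero] at h0 h1 h2
  obtain ⟨ha, hb⟩ := h0
  subst ha hb
  refine ⟨sg8_inj hn (add_right_cancel h1.1), sg8_inj hm (add_right_cancel h2.2), rfl, rfl,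
    add_left_cancel h1.2⟩

lemma aff8_pow {n m : ℕ} (p : ZMod n →+* ZMod m) (b c : ZMod m) (N : ℕ) :
    aff8 p 1 1 0 b c ^ N = aff8 p 1 1 0 (N * b) (N * c) := by
  induction N with
  | zero => simp [aff8_one]
  | succ N ih =>
    rw [pow_succ, ih, aff8_mul]
    congr 1 <;> (try simp [sg8_one]) <;> ring

lemma aff8_pow' {n m : ℕ} (p : ZMod n →+* ZMod m) (d : ℤˣ) (a : ZMod n) (N : ℕ) :
    aff8 p 1 d a 0 0 ^ N = aff8 p 1 (d ^ N) (N * a) 0 0 := by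
  induction N with
  | zero => simp [aff8_one]
  | succ N ih =>
    rw [pow_succ, ih, aff8_mul]
    congr 1 <;> simp [sg8_one, pow_succ] <;> ring

/-- the group of affine permutations -/
def affG8 {n m : ℕ} (p : ZMod n →+* ZMod m) : Subgroup (Equiv.Perm (ZMod n × ZMod m)) where
  carrier := Set.range (fun x : ℤˣ × ℤˣ × ZMod n × ZMod m × ZMod m =>
    aff8 p x.1 x.2.1 x.2.2.1 x.2.2.2.1 x.2.2.2.2)
  mul_mem' := by
    rintro _ _ ⟨⟨e, d, a, b, c⟩, rfl⟩ ⟨⟨e', d', a', b', c'⟩, rfl⟩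
    exact ⟨(_, _, _, _, _), (aff8_mul p e d e' d' a a' b c b' c').symm⟩
  one_mem' := ⟨(1, 1, 0, 0, 0), aff8_one p⟩
  inv_mem' := by
    rintro _ ⟨⟨e, d, a, b, c⟩, rfl⟩
    refine ⟨(e, d, -sg8 n e * a, -sg8 m d * b + sg8 m d * c * sg8 m e * p a,
      - sg8 m d * c * sg8 m e), ?_⟩
    symm
    apply inv_eq_of_mul_eq_one_left
    simp only
    rw [aff8_mul, ← aff8_one p]
    have h2 := sg8_sq m e
    congr 1
    · exact Int.units_mul_self e
    · exact Int.units_mul_self d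
    · ring
    · ring
    · linear_combination (-sg8 m d * c) * h2

lemma card_affG8 {n m : ℕ} (hn : 3 ≤ n) (hm : 3 ≤ m) (p : ZMod n →+* ZMod m) :
    Nat.card (affG8 p) = 4 * m ^ 2 * n := by
  have : Nat.card (affG8 p) = Nat.card (Set.range
      (fun x : ℤˣ × ℤˣ × ZMod n × ZMod m × ZMod m =>
        aff8 p x.1 x.2.1 x.2.2.1 x.2.2.2.1 x.2.2.2.2)) := rfl
  rw [this, Nat.card_range_of_injective]
  · simp only [Nat.card_prod, Nat.card_zmod]
    have : Nat.card ℤˣ = 2 := by simp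
    rw [this]; ring
  · rintro ⟨e, d, a, b, c⟩ ⟨e', d', a', b', c'⟩ h
    obtain ⟨h1, h2, h3, h4, h5⟩ := aff8_inj hn hm p h
    simp only [Prod.mk.injEq]
    exact ⟨h1, h2, h3, h4, h5⟩

lemma closure_affG8 {n m : ℕ} (hn : 3 ≤ n) (hm : 3 ≤ m) (hno : Odd n) (hmo : Odd m)
    (p : ZMod n →+* ZMod m) :
    Subgroup.closure {aff8 p 1 (-1) 1 0 0, aff8 p (-1) (-1) 2 (-3) 2} = affG8 p := by
  have : NeZero n := ⟨by omega⟩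
  have : NeZero m := ⟨by omega⟩
  set C := Subgroup.closure {aff8 p 1 (-1) 1 0 0, aff8 p (-1) (-1) 2 (-3) 2} with hC
  apply le_antisymm
  · rw [hC, Subgroup.closure_le]
    rintro x (rfl | rfl)
    · exact ⟨(_, _, _, _, _), rfl⟩
    · exact ⟨(_, _, _, _, _), rfl⟩
  have g1 : aff8 p 1 (-1) 1 0 0 ∈ C := Subgroup.subset_closure (by simp)
  have g2 : aff8 p (-1) (-1) 2 (-3) 2 ∈ C := Subgroup.subset_closure (by simp)
  have hz : aff8 p 1 (-1) 0 0 0 ∈ C := by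
    have := C.pow_mem g1 n
    rw [aff8_pow', hno.neg_one_pow] at this
    simpa using this
  have ht : aff8 p 1 1 1 0 0 ∈ C := by
    have := C.mul_mem g1 hz
    rw [aff8_mul] at this
    simpa [sg8_one] using this
  have hT : ∀ a, aff8 p 1 1 a 0 0 ∈ C := by
    intro a
    have := C.pow_mem ht a.val
    rw [aff8_pow'] at this
    simpa using this
  have hu : aff8 p 1 1 0 4 (-4) ∈ C := by
    have := C.mul_mem g2 g2
    rw [aff8_mul] at this
    convert this using 2 <;> simp [sg8_neg_one, map_ofNat p 2] <;> norm_num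
  have hv : aff8 p 1 1 0 0 (-4) ∈ C := by
    have := C.mul_mem (C.mul_mem (hT (-1)) hu) (hT 1)
    rw [aff8_mul, aff8_mul] at this
    simpa [sg8_one] using this
  obtain ⟨q, hq⟩ : ∃ q : ZMod m, 4 * q = 1 := by
    have hc : Nat.Coprime 4 m := by
      have : Nat.Coprime 2 m := (Nat.coprime_two_left).2 hmo
      exact Nat.Coprime.pow_left 2 this
    refine ⟨((4 : ℕ) : ZMod m)⁻¹, ?_⟩
    have := ZMod.coe_mul_inv_eq_one 4 hc
    simpa using this
  have hVc : ∀ c, aff8 p 1 1 0 0 c ∈ C := by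
    intro c
    have := C.pow_mem hv (-(q * c)).val
    rw [aff8_pow] at this
    convert this using 2
    · simp
    · simp only [ZMod.natCast_val, ZMod.cast_id', id_eq]
      linear_combination (-c) * hq
  have hVb : ∀ b, aff8 p 1 1 0 b 0 ∈ C := by
    have h4 : aff8 p 1 1 0 4 0 ∈ C := by
      have := C.mul_mem hu (hVc 4)
      rw [aff8_mul] at this
      simpa [sg8_one] using this
    intro b
    have := C.pow_mem h4 (q * b).val
    rw [aff8_pow] at this
    convert this using 2
    · simp only [ZMod.natCast_val, ZMod.cast_id', id_eq]
      linear_combination (-b) * hq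
    · simp
  have hr : aff8 p (-1) 1 0 0 0 ∈ C := by
    have := C.mul_mem (C.mul_mem (C.mul_mem (C.mul_mem (hVb 3) (hT (-2))) g2) (hVc 2)) hz
    simp only [aff8_mul] at this
    convert this using 2 <;> simp [sg8_neg_one, sg8_one]
  have hE : ∀ e, aff8 p e 1 0 0 0 ∈ C := by
    intro e
    rcases Int.units_eq_one_or e with rfl | rfl
    · exact hVb 0
    · exact hr
  have hD : ∀ d, aff8 p 1 d 0 0 0 ∈ C := by
    intro e
    rcases Int.units_eq_one_or e with rfl | rfl
    · exact hVb 0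
    · exact hz
  rintro _ ⟨⟨e, d, a, b, c⟩, rfl⟩
  have := C.mul_mem (C.mul_mem (C.mul_mem (C.mul_mem (hVb b) (hT a)) (hE e)) (hVc c)) (hD d)
  simp only [aff8_mul] at this
  convert this using 2 <;> simp [sg8_one]

lemma main8 {n m : ℕ} (hn : 3 ≤ n) (hm : 3 ≤ m) (hno : Odd n) (hmo : Odd m)
    (p : ZMod n →+* ZMod m) (t₁ t₂ : Equiv.Perm (ZMod n × ZMod m))
    (h₁ : t₁ = aff8 p 1 (-1) 1 0 0) (h₂ : t₂ = aff8 p (-1) (-1) 2 (-3) 2) :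
    orderOf t₁ = 2 * n ∧ orderOf t₂ = 2 * m ∧ orderOf (t₁ * t₂) = 2 ∧
      Nat.card (Subgroup.closure {t₁, t₂} : Subgroup (Equiv.Perm (ZMod n × ZMod m))) =
        4 * m ^ 2 * n := by
  have hsq : t₂ ^ 2 = aff8 p 1 1 0 4 (-4) := by
    rw [h₂, pow_two, aff8_mul]
    congr 1 <;> simp [sg8_neg_one, map_ofNat p 2] <;> norm_num
  refine ⟨?_, ?_, ?_, ?_⟩
  · apply Nat.dvd_antisymm
    · apply orderOf_dvd_of_pow_eq_one
      rw [h₁, aff8_pow', ← aff8_one p]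
      congr 1 <;> simp
    · have := pow_orderOf_eq_one t₁
      generalize orderOf t₁ = N at this ⊢
      rw [h₁, aff8_pow', ← aff8_one p] at this
      obtain ⟨-, h2, h3, -⟩ := aff8_inj hn hm p this
      apply Nat.Coprime.mul_dvd_of_dvd_of_dvd
      · exact Nat.coprime_two_left.2 hno
      · by_contra hN
        rw [← even_iff_two_dvd, Nat.not_even_iff_odd] at hN
        rw [hN.neg_one_pow] at h2
        exact absurd h2 (by decide)
      · rw [mul_one] at h3
        exact (ZMod.natCast_eq_zero_iff _ _).1 h3
  · apply Nat.dvd_antisymm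
    · apply orderOf_dvd_of_pow_eq_one
      rw [pow_mul, hsq, aff8_pow, ← aff8_one p]
      congr 1 <;> simp
    · have := pow_orderOf_eq_one t₂
      generalize orderOf t₂ = N at this ⊢
      rcases Nat.even_or_odd' N with ⟨k, rfl | rfl⟩
      · rw [pow_mul, hsq, aff8_pow, ← aff8_one p] at this
        obtain ⟨-, -, -, h4, -⟩ := aff8_inj hn hm p this
        apply Nat.mul_dvd_mul_left
        have h5 : ((k * 4 : ℕ) : ZMod m) = 0 := by push_cast; exact h4
        rw [ZMod.natCast_eq_zero_iff] at h5
        have hc : Nat.Coprime 4 m := by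
          have : Nat.Coprime 2 m := (Nat.coprime_two_left).2 hmo
          exact Nat.Coprime.pow_left 2 this
        exact hc.symm.dvd_of_dvd_mul_right h5
      · rw [pow_succ, pow_mul, hsq, aff8_pow, h₂, aff8_mul, ← aff8_one p] at this
        obtain ⟨h1, -⟩ := aff8_inj hn hm p this
        exact absurd h1 (by decide)
  · have hp : t₁ * t₂ = aff8 p (-1) 1 3 3 (-2) := by
      rw [h₁, h₂, aff8_mul]
      congr 1 <;> simp [sg8_neg_one, sg8_one] <;> norm_num
    rw [hp]
    apply orderOf_eq_prime
    · rw [pow_two, aff8_mul, ← aff8_one p]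
      congr 1 <;> simp [sg8_neg_one, sg8_one, map_ofNat p 3] <;> norm_num
    · intro h
      rw [← aff8_one p] at h
      obtain ⟨h1, -⟩ := aff8_inj hn hm p h
      exact absurd h1 (by decide)
  · rw [h₁, h₂, closure_affG8 hn hm hno hmo, card_affG8 hn hm]

/-- change of coordinates -/
def phi8 {n m : ℕ} (u : ZMod n → ℤˣ) (q : ZMod m) : Equiv.Perm (ZMod n × ZMod m) where
  toFun x := (x.1, sg8 m (u x.1) * (x.2 - q))
  invFun x := (x.1, sg8 m (u x.1) * x.2 + q)
  left_inv x := by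
    have h := sg8_sq m (u x.1)
    ext
    · rfl
    · simp only; linear_combination (x.2 - q) * h
  right_inv x := by
    have h := sg8_sq m (u x.1)
    ext
    · rfl
    · simp only; linear_combination x.2 * h

lemma zrep_cast {n : ℕ} [NeZero n] (i : ZMod n) : ((zrep i : ℕ) : ZMod n) = i := by
  unfold zrep
  split_ifs with h
  · rw [ZMod.val_eq_zero] at h; simp [h]
  · simp

lemma zrep_pos {n : ℕ} [NeZero n] (i : ZMod n) : 1 ≤ zrep i := by
  unfold zrep
  have := NeZero.pos n
  split_ifs with h <;> omega

lemma zrep_le {n : ℕ} [NeZero n] (i : ZMod n) : zrep i ≤ n := by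
  unfold zrep
  have := ZMod.val_lt i
  split_ifs with h <;> omega

lemma zrep_uniq {n : ℕ} [NeZero n] (i : ZMod n) (k : ℕ) (h1 : 1 ≤ k) (h2 : k ≤ n)
    (h : (k : ZMod n) = i) : zrep i = k := by
  subst h
  unfold zrep
  rw [ZMod.val_natCast]
  rcases h2.lt_or_eq with h | rfl
  · rw [Nat.mod_eq_of_lt h]; split_ifs <;> omega
  · simp

lemma sg8_pow (k N : ℕ) : sg8 k ((-1) ^ N) = (-1) ^ N := by simp [sg8]

theorem statement8
    (m s n : ℕ) (hm : 3 ≤ m) (hmo : Odd m) (hs : 0 < s) (hso : Odd s) (hn : n = s * m)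
    (σ₁ σ₂ : Equiv.Perm (ZMod n × ZMod m))
    (hσ₁ : ∀ (i : ZMod n) (j : ZMod m),
      σ₁ (i, j) = if i = 0 then (i + 1, 1 - j) else (i + 1, j))
    (hσ₂ : ∀ (i : ZMod n) (j : ZMod m),
      σ₂ (i, j) = if i = 1 then (2 - i, 2 - j)
        else (2 - i, j + (-1 : ZMod m) ^ (zrep i - 1) * ((2 * zrep i - 3 : ℕ) : ZMod m)))
    :
    orderOf σ₁ = 2 * n ∧ orderOf σ₂ = 2 * m ∧ orderOf (σ₁ * σ₂) = 2 ∧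
      Nat.card (Subgroup.closure {σ₁, σ₂} : Subgroup (Equiv.Perm (ZMod n × ZMod m))) = 4 * m ^ 2 * n := by
  have hn3 : 3 ≤ n := by rw [hn]; nlinarith
  have hno : Odd n := by rw [hn]; exact hso.mul hmo
  have : NeZero n := ⟨by omega⟩
  have : NeZero m := ⟨by omega⟩
  let p : ZMod n →+* ZMod m := ZMod.castHom (hn ▸ Dvd.intro_left s rfl) (ZMod m)
  obtain ⟨q, hq⟩ : ∃ q : ZMod m, 2 * q = 1 := by
    refine ⟨((2 : ℕ) : ZMod m)⁻¹, ?_⟩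
    have := ZMod.coe_mul_inv_eq_one 2 ((Nat.coprime_two_left).2 hmo)
    simpa using this
  let F : Equiv.Perm (ZMod n × ZMod m) := phi8 (fun i => (-1) ^ zrep i) q
  have hF : ∀ i j, F (i, j) = (i, (-1) ^ zrep i * (j - q)) := by
    intro i j
    change (i, sg8 m ((-1) ^ zrep i) * (j - q)) = _
    rw [sg8_pow]
  have e1 : F * σ₁ = aff8 p 1 (-1) 1 0 0 * F := by
    refine Equiv.ext ?_
    rintro ⟨i, j⟩
    rw [Equiv.Perm.mul_apply, Equiv.Perm.mul_apply, hσ₁, hF, aff8_apply]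
    simp only [sg8_one, sg8_neg_one]
    split_ifs with hi
    · have z0 : zrep i = n := zrep_uniq i n (by omega) le_rfl (by simp [hi])
      have z1 : zrep (i + 1) = 1 := zrep_uniq _ 1 le_rfl (by omega) (by simp [hi])
      rw [hF, z0, z1, hno.neg_one_pow]
      ext
      · simp
      · simp only; linear_combination hq
    · have hlt : zrep i ≠ n := by
        intro h
        have := zrep_cast i
        rw [h] at this
        exact hi (by simpa using this.symm)
      have := zrep_le i
      have z1 : zrep (i + 1) = zrep i + 1 :=
        zrep_uniq _ _ (by omega) (by omega) (by push_cast; rw [zrep_cast])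
      rw [hF, z1]
      ext
      · simp
      · simp only; ring
  have e2 : F * σ₂ = aff8 p (-1) (-1) 2 (-3) 2 * F := by
    refine Equiv.ext ?_
    rintro ⟨i, j⟩
    rw [Equiv.Perm.mul_apply, Equiv.Perm.mul_apply, hσ₂, hF, aff8_apply]
    simp only [sg8_neg_one]
    split_ifs with hi
    · have z1 : zrep i = 1 := zrep_uniq _ 1 le_rfl (by omega) (by simp [hi])
      have h2 : 2 - i = i := by rw [hi]; norm_num
      rw [h2, hF, z1]
      ext
      · simp only; linear_combination -h2
      · simp only [hi, map_one]; linear_combination hq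
    · have hne : zrep i ≠ 1 := by
        intro h
        have := zrep_cast i
        rw [h] at this
        exact hi (by simpa using this.symm)
      have hle := zrep_le i
      have hpos := zrep_pos i
      obtain ⟨r, hr⟩ : ∃ r, zrep i = r + 2 := ⟨zrep i - 2, by omega⟩
      obtain ⟨t, ht⟩ : ∃ t, n = r + 2 + t := ⟨n - (r + 2), by omega⟩
      have hi' : i = (r : ZMod n) + 2 := by
        have := zrep_cast i
        rw [hr] at this
        rw [← this]; push_cast; rfl
      have hpi : p i = (r : ZMod m) + 2 := by rw [hi', map_add, map_natCast, map_ofNat p 2]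
      have z1 : zrep (2 - i) = t + 2 := by
        apply zrep_uniq
        · omega
        · omega
        · have h0 : ((r + 2 + t : ℕ) : ZMod n) = 0 := by rw [← ht]; simp
          push_cast at h0
          rw [hi']; push_cast
          linear_combination h0
      have hpar : (-1 : ZMod m) ^ t = - (-1) ^ r := by
        have h3 : (-1 : ZMod m) ^ (r + 2 + t) = -1 := by rw [← ht]; exact hno.neg_one_pow
        have h4 : (-1 : ZMod m) ^ r * (-1) ^ r = 1 := by rw [← mul_pow]; simp
        rw [pow_add, pow_add] at h3
        linear_combination (-1 : ZMod m) ^ r * h3 - (-1 : ZMod m) ^ t * h4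
      have h4 : (-1 : ZMod m) ^ r * (-1) ^ r = 1 := by rw [← mul_pow]; simp
      have s1 : r + 2 - 1 = r + 1 := by omega
      have s2 : 2 * (r + 2) - 3 = 2 * r + 1 := by omega
      rw [hF, z1, hr, hpi, s1, s2]
      ext
      · simp only; ring
      · simp only [pow_add, hpar]; push_cast
        linear_combination (2 * (r : ZMod m) + 1) * h4
  have c1 : MulAut.conj F σ₁ = aff8 p 1 (-1) 1 0 0 := by
    rw [MulAut.conj_apply, e1, mul_inv_cancel_right]
  have c2 : MulAut.conj F σ₂ = aff8 p (-1) (-1) 2 (-3) 2 := by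
    rw [MulAut.conj_apply, e2, mul_inv_cancel_right]
  obtain ⟨k1, k2, k3, k4⟩ := main8 hn3 hm hno hmo p _ _ c1 c2
  rw [← map_mul, MulEquiv.orderOf_eq] at k3
  rw [MulEquiv.orderOf_eq] at k1 k2
  refine ⟨k1, k2, k3, ?_⟩
  rw [← k4]
  have : Subgroup.closure {MulAut.conj F σ₁, MulAut.conj F σ₂} =
      (Subgroup.closure {σ₁, σ₂}).map (MulAut.conj F).toMonoidHom := by
    rw [MonoidHom.map_closure, Set.image_pair]; rfl
  rw [this, Subgroup.card_map_of_injective (MulAut.conj F).injective]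
end

section
/- The permutation σ₂ fixes the vertex v = (1,1) of Γ, and the cyclic group ⟨σ₂⟩ acts transitively on the 2m neighbours of v. -/
theorem statement9
    (m s n : ℕ) (hm : 3 ≤ m) (hmo : Odd m) (hs : 0 < s) (hso : Odd s) (hn : n = s * m)
    (σ₂ : Equiv.Perm (ZMod n × ZMod m))
    (hσ₂ : ∀ (i : ZMod n) (j : ZMod m),
      σ₂ (i, j) = if i = 1 then (2 - i, 2 - j)
        else (2 - i, j + (-1 : ZMod m) ^ (zrep i - 1) * ((2 * zrep i - 3 : ℕ) : ZMod m)))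
    :
    σ₂ ((1, 1) : ZMod n × ZMod m) = (1, 1) ∧
      (∀ w w' : ZMod n × ZMod m,
        (lexCycle n m).Adj ((1, 1) : ZMod n × ZMod m) w →
        (lexCycle n m).Adj ((1, 1) : ZMod n × ZMod m) w' →
        ∃ k : ℤ, (σ₂ ^ k) w = w') := by
  have hno : Odd n := hn ▸ hso.mul hmo
  have hn3 : 3 ≤ n := by subst hn; nlinarith
  have hnm : ((n : ℕ) : ZMod m) = 0 := by subst hn; simp
  haveI : NeZero n := ⟨by omega⟩
  haveI : NeZero m := ⟨by omega⟩
  haveI : Fact (1 < n) := ⟨by omega⟩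
  have v2 : (2 : ZMod n).val = 2 := by
    have := ZMod.val_cast_of_lt (n := n) (a := 2) (by omega)
    simpa using this
  have z2 : zrep (2 : ZMod n) = 2 := by simp [zrep, v2]
  have z0 : zrep (0 : ZMod n) = n := by simp [zrep]
  have h21 : (2 : ZMod n) ≠ 1 := by
    intro h
    have := congrArg ZMod.val h
    rw [v2, ZMod.val_one] at this
    omega
  have s2 : ∀ j, σ₂ (2, j) = (0, j - 1) := by
    intro j
    rw [hσ₂, if_neg h21, z2]
    simp [sub_eq_add_neg]
  have s0 : ∀ j, σ₂ (0, j) = (2, j - 3) := by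
    intro j
    have he : Even (n - 1) := Nat.Odd.sub_odd hno odd_one
    rw [hσ₂, if_neg zero_ne_one, z0, he.neg_one_pow, Nat.cast_sub (by omega)]
    simp [hnm, sub_eq_add_neg]
  have hp : ∀ (k : ℕ), (σ₂ ^ (2 * k)) ((2, 0) : ZMod n × ZMod m) = (2, -4 * (k : ZMod m)) := by
    intro k
    induction k with
    | zero => simp
    | succ k ih =>
      rw [show 2 * (k + 1) = 1 + (1 + 2 * k) by ring, pow_add, pow_add, pow_one,
        Equiv.Perm.mul_apply, Equiv.Perm.mul_apply, ih, s2, s0]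
      push_cast
      congr 1
      ring
  have hu : IsUnit (4 : ZMod m) := by
    have h := (ZMod.isUnit_iff_coprime 4 m).2
      (by rw [show 4 = 2 ^ 2 by norm_num]
          exact Nat.Coprime.pow_left 2 (Nat.coprime_two_left.2 hmo))
    simpa using h
  have o2 : ∀ j : ZMod m, σ₂.SameCycle ((2, 0) : ZMod n × ZMod m) (2, j) := by
    intro j
    obtain ⟨t, ht⟩ := hu.dvd (a := -j)
    refine ⟨((2 * t.val : ℕ) : ℤ), ?_⟩
    rw [zpow_natCast, hp, ZMod.natCast_zmod_val, neg_mul, ← ht, neg_neg]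
  have o0 : ∀ j : ZMod m, σ₂.SameCycle ((2, 0) : ZMod n × ZMod m) (0, j) := by
    intro j
    have h := s2 (j + 1)
    rw [add_sub_cancel_right] at h
    rw [← h]
    exact Equiv.Perm.sameCycle_apply_right.2 (o2 _)
  have ho : ∀ w, (lexCycle n m).Adj ((1, 1) : ZMod n × ZMod m) w →
      σ₂.SameCycle ((2, 0) : ZMod n × ZMod m) w := by
    rintro ⟨i, j⟩ h
    rw [lexCycle, SimpleGraph.fromRel_adj] at h
    rcases h.2 with h | h
    · have : i = 2 := by rw [show i = 1 + 1 from h]; norm_num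
      rw [this]; exact o2 j
    · have h' : (1 : ZMod n) = i + 1 := h
      have : i = 0 := by simpa using h'
      rw [this]; exact o0 j
  refine ⟨?_, fun w w' hw hw' => (ho w hw).symm.trans (ho w' hw')⟩
  rw [hσ₂, if_pos rfl]
  congr 1 <;> norm_num
end

section
/- The permutation ρ defined by ρ(i,j) = (2−i, j) if i ≡ 1 (mod n) and ρ(i,j) = (2−i, 1−j) otherwise is an involutory automorphism of Γ that belongs to the subgroup G = ⟨σ₁, σ₂⟩, fixes the vertex (1,1), and satisfies ρσ₁ρ = σ₁⁻¹ and ρσ₂ρ = σ₂⁻¹. -/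
theorem aux_pow {n m : ℕ} (P : Equiv.Perm (ZMod n × ZMod m)) (f : ZMod n → ZMod m)
    (h : ∀ i j, P (i, j) = (i, j + f i)) (k : ℕ) :
    ∀ i j, (P ^ k) (i, j) = (i, j + k * f i) := by
  induction k with
  | zero => intro i j; simp
  | succ k ih =>
    intro i j
    rw [pow_succ, Equiv.Perm.mul_apply, h, ih]
    ext <;> simp
    ring

theorem aux_inv {n m : ℕ} (P : Equiv.Perm (ZMod n × ZMod m)) (f : ZMod n → ZMod m)
    (h : ∀ i j, P (i, j) = (i, j + f i)) :
    ∀ i j, P⁻¹ (i, j) = (i, j - f i) := by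
  intro i j
  rw [Equiv.Perm.inv_eq_iff_eq, h]
  simp

theorem statement10
    (m s n : ℕ) (hm : 3 ≤ m) (hmo : Odd m) (hs : 0 < s) (hso : Odd s) (hn : n = s * m)
    (σ₁ σ₂ ρ : Equiv.Perm (ZMod n × ZMod m))
    (hσ₁ : ∀ (i : ZMod n) (j : ZMod m),
      σ₁ (i, j) = if i = 0 then (i + 1, 1 - j) else (i + 1, j))
    (hσ₂ : ∀ (i : ZMod n) (j : ZMod m),
      σ₂ (i, j) = if i = 1 then (2 - i, 2 - j)
        else (2 - i, j + (-1 : ZMod m) ^ (zrep i - 1) * ((2 * zrep i - 3 : ℕ) : ZMod m)))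
    (hρ : ∀ (i : ZMod n) (j : ZMod m),
      ρ (i, j) = if i = 1 then (2 - i, j) else (2 - i, 1 - j))
    :
    (∀ u v : ZMod n × ZMod m, (lexCycle n m).Adj (ρ u) (ρ v) ↔ (lexCycle n m).Adj u v) ∧
      ρ * ρ = 1 ∧ ρ ∈ Subgroup.closure {σ₁, σ₂} ∧
      ρ ((1, 1) : ZMod n × ZMod m) = (1, 1) ∧
      ρ * σ₁ * ρ = σ₁⁻¹ ∧ ρ * σ₂ * ρ = σ₂⁻¹ := by
  have hn3 : 3 ≤ n := by rw [hn]; nlinarith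
  have hno : Odd n := by rw [hn]; exact hso.mul hmo
  have hdvd : m ∣ n := ⟨s, by rw [hn]; ring⟩
  clear hn
  have : NeZero n := ⟨by omega⟩
  have : NeZero m := ⟨by omega⟩
  have : Fact (1 < n) := ⟨by omega⟩
  have h10 : (1 : ZMod n) ≠ 0 := one_ne_zero
  have hv1 : (1 : ZMod n).val = 1 := ZMod.val_one n
  obtain ⟨φ, hφ⟩ : ∃ φ : ZMod n →+* ZMod m, φ = ZMod.castHom hdvd (ZMod m) := ⟨_, rfl⟩
  have hφv : ∀ i : ZMod n, ((i.val : ℕ) : ZMod m) = φ i := by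
    intro i
    have : φ ((i.val : ℕ) : ZMod n) = ((i.val : ℕ) : ZMod m) := map_natCast φ _
    rw [← this, ZMod.natCast_zmod_val]
  have hsucc : ∀ i : ZMod n, i ≠ 0 → i.val = (i - 1).val + 1 := by
    intro i hi
    have h0 : i.val ≠ 0 := by rwa [Ne, ZMod.val_eq_zero]
    have : (i - 1).val = i.val - (1 : ZMod n).val := ZMod.val_sub (by rw [hv1]; omega)
    rw [this, hv1]; omega
  have hz : ∀ i : ZMod n, zrep i = (i - 1).val + 1 := by
    intro i
    unfold zrep
    split_ifs with h
    · rw [ZMod.val_eq_zero] at h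
      subst h
      rw [zero_sub, ZMod.neg_val, if_neg h10, hv1]; omega
    · exact hsucc i (by rwa [Ne, ← ZMod.val_eq_zero])
  obtain ⟨e, he⟩ : ∃ e : ZMod n → ZMod m, ∀ i, e i = (-1) ^ ((i - 1).val) := ⟨_, fun _ => rfl⟩
  have he0 : e 0 = 1 := by
    rw [he, zero_sub, ZMod.neg_val, if_neg h10, hv1]
    exact (Nat.Odd.sub_odd hno odd_one).neg_one_pow
  have he1 : e 1 = 1 := by rw [he]; simp
  have hes : ∀ i, i ≠ 0 → e (i + 1) = - e i := by
    intro i hi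
    rw [he, he, add_sub_cancel_right, hsucc i hi, pow_succ]; ring
  have her : ∀ i, i ≠ 1 → e (2 - i) = - e i := by
    intro i hi
    have h1 : i - 1 ≠ 0 := sub_ne_zero.mpr hi
    have h2 : 2 - i - 1 = -(i - 1) := by ring
    rw [he, he, h2, ZMod.neg_val, if_neg h1]
    have hlt := ZMod.val_lt (i - 1)
    rcases Nat.even_or_odd (i - 1).val with h | h
    · rw [h.neg_one_pow, (Nat.Odd.sub_even hlt.le hno h).neg_one_pow]
    · rw [h.neg_one_pow, (Nat.Odd.sub_odd hno h).neg_one_pow]; ring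
  have hσ₂' : ∀ i j, i ≠ 1 → σ₂ (i, j) = (2 - i, j + e i * (2 * φ i - 3)) := by
    intro i j hi
    have h1 : i - 1 ≠ 0 := sub_ne_zero.mpr hi
    have h2 : (i - 1).val ≠ 0 := by rwa [Ne, ZMod.val_eq_zero]
    rw [hσ₂, if_neg hi, hz, he]
    have h3 : ((2 * ((i - 1).val + 1) - 3 : ℕ) : ZMod m) = 2 * φ i - 3 := by
      rw [Nat.cast_sub (by omega)]
      push_cast
      rw [hφv, map_sub, map_one]; ring
    rw [h3]; rfl
  have hσ₂1 : ∀ j, σ₂ (1, j) = (1, 2 - j) := by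
    intro j
    rw [hσ₂, if_pos rfl]
    norm_num
  have hρ1 : ∀ j, ρ (1, j) = (1, j) := by
    intro j
    rw [hρ, if_pos rfl]
    norm_num
  have hρ' : ∀ i j, i ≠ 1 → ρ (i, j) = (2 - i, 1 - j) := by
    intro i j hi
    rw [hρ, if_neg hi]
  have hσ₁0 : ∀ j, σ₁ (0, j) = (1, 1 - j) := by
    intro j
    rw [hσ₁, if_pos rfl, zero_add]
  have hσ₁' : ∀ i j, i ≠ 0 → σ₁ (i, j) = (i + 1, j) := by
    intro i j hi
    rw [hσ₁, if_neg hi]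
  have h2i : ∀ i : ZMod n, i ≠ 1 → 2 - i ≠ 1 := by
    intro i hi h
    apply hi
    linear_combination -h
  have hρfst : ∀ u, (ρ u).1 = 2 - u.1 := by
    rintro ⟨i, j⟩
    rw [hρ]; split_ifs <;> rfl
  have hρρ : ρ * ρ = 1 := by
    ext1 ⟨i, j⟩
    rw [Equiv.Perm.mul_apply, Equiv.Perm.one_apply]
    by_cases hi : i = 1
    · subst hi; rw [hρ1, hρ1]
    · rw [hρ' _ _ hi, hρ' _ _ (h2i i hi)]
      ext <;> simp
  -- the square of sigma two
  have hA : ∀ i j, (σ₂ ^ 2) (i, j) = (i, j + e i * (4 * (φ i - 1))) := by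
    intro i j
    rw [pow_two, Equiv.Perm.mul_apply]
    by_cases hi : i = 1
    · subst hi
      rw [hσ₂1, hσ₂1]
      simp
    · rw [hσ₂' _ _ hi, hσ₂' _ _ (h2i i hi), her i hi]
      ext
      · simp
      · simp only [map_sub, map_ofNat]; ring
  have hC : ∀ i j, (σ₁ * σ₂ ^ 2 * σ₁⁻¹) (i, j) = (i, j + -(e i * (4 * (φ i - 2)))) := by
    intro i j
    rw [Equiv.Perm.mul_apply, Equiv.Perm.mul_apply]
    by_cases hi : i = 1
    · subst hi
      have : σ₁⁻¹ (1, j) = (0, 1 - j) := by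
        rw [Equiv.Perm.inv_eq_iff_eq, hσ₁0]; simp
      rw [this, hA, hσ₁0, he0, he1]
      ext
      · simp
      · simp only [map_one, map_zero]; ring
    · have hi' : i - 1 ≠ 0 := sub_ne_zero.mpr hi
      have : σ₁⁻¹ (i, j) = (i - 1, j) := by
        rw [Equiv.Perm.inv_eq_iff_eq, hσ₁' _ _ hi']; simp
      have h3 := hes (i - 1) hi'
      rw [sub_add_cancel] at h3
      rw [this, hA, hσ₁' _ _ hi', h3]
      ext
      · simp
      · simp only [map_one, map_sub]; ring
  have hB : ∀ i j, (σ₁ * σ₂ ^ 2 * σ₁⁻¹ * σ₂ ^ 2) (i, j) = (i, j + e i * 4) := by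
    intro i j
    rw [Equiv.Perm.mul_apply, hA, hC]
    ext
    · simp
    · simp only; ring
  -- powers of sigma one
  have hk : ∀ k : ℕ, k < n → ∀ j, (σ₁ ^ (k + 1)) (0, j) = (((k + 1 : ℕ) : ZMod n), 1 - j) := by
    intro k
    induction k with
    | zero => intro _ j; simp [hσ₁0]
    | succ k ih =>
      intro hlt j
      rw [pow_succ', Equiv.Perm.mul_apply, ih (by omega), hσ₁']
      · push_cast; rfl
      · rw [Ne, ZMod.natCast_eq_zero_iff]
        intro hd
        have := Nat.le_of_dvd (by omega) hd
        omega
  have ht0 : ∀ j, (σ₁ ^ n) (0, j) = (0, 1 - j) := by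
    intro j
    have := hk (n - 1) (by omega) j
    rw [Nat.sub_add_cancel (by omega)] at this
    rw [this]; simp
  have ht : ∀ i j, (σ₁ ^ n) (i, j) = (i, 1 - j) := by
    intro i j
    by_cases hi : i = 0
    · subst hi; exact ht0 j
    · have h0 := hsucc i hi
      have hlt := ZMod.val_lt i
      have hk' := hk (i - 1).val (by omega)
      rw [← h0] at hk'
      simp only [ZMod.natCast_zmod_val] at hk'
      have h1 : (i, j) = (σ₁ ^ i.val) (0, 1 - j) := by rw [hk']; simp
      rw [h1, ← Equiv.Perm.mul_apply, ← pow_add, add_comm, pow_add, Equiv.Perm.mul_apply, ht0, hk']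
      simp
  obtain ⟨q, hq⟩ : ∃ q : ℕ, (q : ZMod m) * 4 = 1 := by
    have hc : Nat.Coprime 4 m := by
      have : Nat.Coprime (2 ^ 2) m := Nat.Coprime.pow_left 2 (Nat.coprime_two_left.mpr hmo)
      simpa using this
    refine ⟨((4 : ℕ) : ZMod m)⁻¹.val, ?_⟩
    rw [ZMod.natCast_zmod_val, mul_comm]
    exact_mod_cast ZMod.coe_mul_inv_eq_one 4 hc
  have hT1 := aux_pow _ _ hA (2 * q)
  have hT2 := aux_inv _ _ (aux_pow _ _ hB q)
  have hword : σ₁ ^ n * ((σ₂ ^ 2) ^ (2 * q) * ((σ₁ * σ₂ ^ 2 * σ₁⁻¹ * σ₂ ^ 2) ^ q)⁻¹) = ρ * σ₂ := by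
    ext1 ⟨i, j⟩
    rw [Equiv.Perm.mul_apply, Equiv.Perm.mul_apply, Equiv.Perm.mul_apply, hT2, hT1, ht]
    by_cases hi : i = 1
    · subst hi
      rw [hσ₂1, hρ1, he1]
      ext
      · simp
      · simp only [map_one]
        push_cast
        linear_combination hq
    · rw [hσ₂' _ _ hi, hρ' _ _ (h2i i hi)]
      ext
      · simp
      · simp only
        push_cast
        linear_combination (e i - 2 * e i * (φ i - 1)) * hq
  have hmem : ρ ∈ Subgroup.closure {σ₁, σ₂} := by
    have m1 : σ₁ ∈ Subgroup.closure {σ₁, σ₂} := Subgroup.subset_closure (by simp)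
    have m2 : σ₂ ∈ Subgroup.closure {σ₁, σ₂} := Subgroup.subset_closure (by simp)
    have m3 := pow_mem m2 2
    rw [eq_mul_inv_of_mul_eq hword.symm]
    exact mul_mem (mul_mem (pow_mem m1 n) (mul_mem (pow_mem m3 _)
      (inv_mem (pow_mem (mul_mem (mul_mem (mul_mem m1 m3) (inv_mem m1)) m3) q)))) (inv_mem m2)
  refine ⟨?_, hρρ, hmem, hρ1 1, ?_, ?_⟩
  · intro u v
    unfold lexCycle
    rw [SimpleGraph.fromRel_adj, SimpleGraph.fromRel_adj, hρfst, hρfst, ρ.injective.ne_iff]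
    have e1 : 2 - v.1 = 2 - u.1 + 1 ↔ u.1 = v.1 + 1 :=
      ⟨fun h => by linear_combination h, fun h => by linear_combination h⟩
    have e2 : 2 - u.1 = 2 - v.1 + 1 ↔ v.1 = u.1 + 1 :=
      ⟨fun h => by linear_combination h, fun h => by linear_combination h⟩
    rw [e1, e2, or_comm]
  · rw [eq_inv_iff_mul_eq_one]
    ext1 ⟨i, j⟩
    simp only [Equiv.Perm.mul_apply, Equiv.Perm.one_apply]
    by_cases hi : i = 0
    · subst hi
      rw [hσ₁0, hρ1, hσ₁' _ _ h10, hρ' _ _ (by simp)]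
      ext
      · norm_num
      · simp
    · rw [hσ₁' _ _ hi, hρ' (i + 1) j (by simpa using hi)]
      by_cases hi1 : i = 1
      · subst hi1
        have : (2 : ZMod n) - (1 + 1) = 0 := by norm_num
        rw [this, hσ₁0, hρ1]; simp
      · rw [hσ₁' (2 - (i + 1)) (1 - j), hρ' (2 - (i + 1) + 1) (1 - j)]
        · ext
          · simp only; ring
          · simp
        · intro h
          apply hi1
          linear_combination -h
        · intro h
          apply hi1
          linear_combination -h
  · rw [eq_inv_iff_mul_eq_one]
    ext1 ⟨i, j⟩
    simp only [Equiv.Perm.mul_apply, Equiv.Perm.one_apply]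
    by_cases hi : i = 1
    · subst hi
      rw [hσ₂1, hρ1, hσ₂1, hρ1]; simp
    · rw [hσ₂' _ _ hi, hρ' _ _ (h2i i hi), sub_sub_cancel, hσ₂' _ _ hi, hρ' _ _ (h2i i hi)]
      ext
      · simp
      · simp only; ring
end

section
/- The subgroup G = ⟨σ₁, σ₂⟩ of the automorphism group of Γ acts transitively on the arcs of Γ, and the stabiliser in G of the arc ((1,1),(2,1)) has order 2. -/
theorem zrep_unique {n : ℕ} [NeZero n] (i : ZMod n) (z : ℕ) (h1 : 1 ≤ z) (h2 : z ≤ n)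
    (h : (z : ZMod n) = i) : zrep i = z := by
  subst h
  unfold zrep
  rw [ZMod.val_natCast]
  rcases Nat.lt_or_ge z n with h3 | h3
  · rw [Nat.mod_eq_of_lt h3, if_neg (by omega)]
  · have : z = n := le_antisymm h2 h3
    subst this
    simp

theorem zrep_spec {n : ℕ} [NeZero n] (i : ZMod n) :
    1 ≤ zrep i ∧ zrep i ≤ n ∧ ((zrep i : ℕ) : ZMod n) = i := by
  have hv := ZMod.val_lt i
  have hz : ((i.val : ℕ) : ZMod n) = i := ZMod.natCast_zmod_val i
  have hn : 0 < n := Nat.pos_of_ne_zero (NeZero.ne n)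
  unfold zrep
  split_ifs with h
  · refine ⟨hn, le_rfl, ?_⟩
    rw [← hz, h]; simp
  · exact ⟨by omega, hv.le, hz⟩

def FF (n m : ℕ) (v : ZMod n × ZMod m) : ZMod m := (-1) ^ (zrep v.1) * (2 * v.2 - 1)

def RepG {n m : ℕ} (φ : ZMod n →+* ZMod m) (g : Equiv.Perm (ZMod n × ZMod m))
    (ε : ZMod n) (δ : ZMod m) (c : ZMod n) (α β : ZMod m) : Prop :=
  ∀ v, (g v).1 = ε * v.1 + c ∧ FF n m (g v) = δ * FF n m v + α + β * φ v.1

def MG {n m : ℕ} (φ : ZMod n →+* ZMod m) (G : Subgroup (Equiv.Perm (ZMod n × ZMod m)))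
    (ε : ZMod n) (δ : ZMod m) (c : ZMod n) (α β : ZMod m) : Prop :=
  ∃ g ∈ G, RepG φ g ε δ c α β

theorem RepG.mul {n m : ℕ} {φ : ZMod n →+* ZMod m} {g g' : Equiv.Perm (ZMod n × ZMod m)}
    {ε ε' : ZMod n} {δ δ' : ZMod m} {c c' : ZMod n} {α β α' β' : ZMod m}
    (h' : RepG φ g' ε' δ' c' α' β') (h : RepG φ g ε δ c α β) :
    RepG φ (g' * g) (ε' * ε) (δ' * δ) (ε' * c + c') (δ' * α + α' + β' * φ c)
      (δ' * β + β' * φ ε) := by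
  intro v
  obtain ⟨a1, a2⟩ := h v
  obtain ⟨b1, b2⟩ := h' (g v)
  rw [Equiv.Perm.mul_apply, b1, b2, a1, a2]
  constructor
  · ring
  · simp only [map_add, map_mul]; ring

theorem MG.mul {n m : ℕ} {φ : ZMod n →+* ZMod m} {G : Subgroup (Equiv.Perm (ZMod n × ZMod m))}
    {ε ε' : ZMod n} {δ δ' : ZMod m} {c c' : ZMod n} {α β α' β' : ZMod m}
    (h' : MG φ G ε' δ' c' α' β') (h : MG φ G ε δ c α β) :
    MG φ G (ε' * ε) (δ' * δ) (ε' * c + c') (δ' * α + α' + β' * φ c)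
      (δ' * β + β' * φ ε) := by
  obtain ⟨g, hg, r⟩ := h
  obtain ⟨g', hg', r'⟩ := h'
  exact ⟨g' * g, G.mul_mem hg' hg, r'.mul r⟩

theorem MG.congr {n m : ℕ} {φ : ZMod n →+* ZMod m} {G : Subgroup (Equiv.Perm (ZMod n × ZMod m))}
    {ε ε' : ZMod n} {δ δ' : ZMod m} {c c' : ZMod n} {α β α' β' : ZMod m}
    (h : MG φ G ε δ c α β) (h1 : ε = ε') (h2 : δ = δ') (h3 : c = c') (h4 : α = α') (h5 : β = β') :
    MG φ G ε' δ' c' α' β' := by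
  subst h1 h2 h3 h4 h5; exact h

theorem FF_inj {n m : ℕ} (h2 : IsUnit (2 : ZMod m)) {v w : ZMod n × ZMod m} (h : v.1 = w.1)
    (hF : FF n m v = FF n m w) : v = w := by
  obtain ⟨i, j⟩ := v
  obtain ⟨i', j'⟩ := w
  simp only at h
  subst h
  unfold FF at hF
  have hu : IsUnit ((-1 : ZMod m) ^ (zrep i)) := (isUnit_one.neg).pow _
  have := hu.mul_left_cancel hF
  have := h2.mul_left_cancel (sub_left_injective this)
  simp only at this
  rw [this]

theorem RepG.ext {n m : ℕ} (h2 : IsUnit (2 : ZMod m)) {φ : ZMod n →+* ZMod m}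
    {g g' : Equiv.Perm (ZMod n × ZMod m)}
    {ε : ZMod n} {δ : ZMod m} {c : ZMod n} {α β : ZMod m}
    (h : RepG φ g ε δ c α β) (h' : RepG φ g' ε δ c α β) : g = g' := by
  ext1 v
  exact FF_inj h2 ((h v).1.trans (h' v).1.symm) ((h v).2.trans (h' v).2.symm)

theorem neg_one_pow_eq_of {R : Type*} [CommRing R] {a b : ℕ} (h : Odd (a + b)) :
    (-1 : R) ^ a = - (-1) ^ b := by
  rcases Nat.even_or_odd a with ha | ha
  · have hb : Odd b := by
      by_contra hb; rw [Nat.not_odd_iff_even] at hb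
      exact (Nat.not_odd_iff_even.2 (ha.add hb)) h
    rw [ha.neg_one_pow, hb.neg_one_pow]; ring
  · have hb : Even b := by
      by_contra hb; rw [Nat.not_even_iff_odd] at hb
      exact (Nat.not_odd_iff_even.2 (ha.add_odd hb)) h
    rw [ha.neg_one_pow, hb.neg_one_pow]

theorem rep_s1 {n m : ℕ} [NeZero n] (hn3 : 3 ≤ n) (hno : Odd n) (φ : ZMod n →+* ZMod m)
    (σ₁ : Equiv.Perm (ZMod n × ZMod m))
    (hσ₁ : ∀ (i : ZMod n) (j : ZMod m),
      σ₁ (i, j) = if i = 0 then (i + 1, 1 - j) else (i + 1, j)) :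
    RepG φ σ₁ 1 (-1) 1 0 0 := by
  rintro ⟨i, j⟩
  rw [hσ₁]
  have hs := zrep_spec i
  split_ifs with h
  · subst h
    have e1 : zrep (0 : ZMod n) = n := zrep_unique _ _ (by omega) le_rfl (by simp)
    have e2 : zrep (0 + 1 : ZMod n) = 1 := zrep_unique _ _ le_rfl (by omega) (by simp)
    refine ⟨by simp, ?_⟩
    simp only [FF, e1, e2, hno.neg_one_pow]
    ring
  · have hlt : zrep i ≠ n := by
      intro h'
      apply h
      rw [← hs.2.2, h']; simp
    have e : zrep (i + 1) = zrep i + 1 := zrep_unique _ _ (by omega) (by omega)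
      (by push_cast; rw [hs.2.2])
    refine ⟨by simp, ?_⟩
    simp only [FF, e, pow_succ]
    ring

theorem rep_s2 {n m : ℕ} [NeZero n] (hn3 : 3 ≤ n) (hno : Odd n) (φ : ZMod n →+* ZMod m)
    (σ₂ : Equiv.Perm (ZMod n × ZMod m))
    (hσ₂ : ∀ (i : ZMod n) (j : ZMod m),
      σ₂ (i, j) = if i = 1 then (2 - i, 2 - j)
        else (2 - i, j + (-1 : ZMod m) ^ (zrep i - 1) * ((2 * zrep i - 3 : ℕ) : ZMod m))) :
    RepG φ σ₂ (-1) (-1) 2 (-6) 4 := by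
  rintro ⟨i, j⟩
  rw [hσ₂]
  have hs := zrep_spec i
  split_ifs with h
  · subst h
    have e1 : zrep (1 : ZMod n) = 1 := zrep_unique _ _ le_rfl (by omega) (by simp)
    have e2 : zrep (2 - 1 : ZMod n) = 1 := zrep_unique _ _ le_rfl (by omega) (by norm_num)
    refine ⟨by ring, ?_⟩
    simp only [FF, e1, e2, map_one]
    ring
  · have hne : zrep i ≠ 1 := by
      intro h'
      apply h
      rw [← hs.2.2, h']; simp
    have e : zrep (2 - i) = n + 2 - zrep i := zrep_unique _ _ (by omega) (by omega)
      (by rw [Nat.cast_sub (by omega)]; push_cast; rw [hs.2.2]; simp)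
    have hφ : φ i = (zrep i : ZMod m) := by
      conv_lhs => rw [← hs.2.2]
      simp
    refine ⟨by ring, ?_⟩
    have p1 : (-1 : ZMod m) ^ (n + 2 - zrep i) = - (-1) ^ (zrep i) := by
      apply neg_one_pow_eq_of
      have : n + 2 - zrep i + zrep i = n + 2 := by omega
      rw [this]
      exact hno.add_even even_two
    have p2 : (-1 : ZMod m) ^ (zrep i - 1) = - (-1) ^ (zrep i) := by
      apply neg_one_pow_eq_of
      exact ⟨zrep i - 1, by omega⟩
    have p3 : ((-1 : ZMod m) ^ (zrep i)) * (-1) ^ (zrep i) = 1 := by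
      rw [← mul_pow]; simp
    simp only [FF, e, p1, p2, hφ]
    rw [Nat.cast_sub (by omega)]
    push_cast
    linear_combination (2 * (2 * (zrep i : ZMod m) - 3)) * p3

theorem MG_all {n m : ℕ} [NeZero n] [NeZero m] (hno : Odd n)
    (h2 : IsUnit (2 : ZMod m)) (φ : ZMod n →+* ZMod m)
    (G : Subgroup (Equiv.Perm (ZMod n × ZMod m)))
    (m1 : MG φ G 1 (-1) 1 0 0) (m2 : MG φ G (-1) (-1) 2 (-6) 4)
    (ε : ZMod n) (hε : ε = 1 ∨ ε = -1) (δ : ZMod m) (hδ : δ = 1 ∨ δ = -1)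
    (c : ZMod n) (α β : ZMod m) : MG φ G ε δ c α β := by
  have hone : MG φ G 1 1 0 0 0 := ⟨1, G.one_mem, fun v => by simp⟩
  have hpow : ∀ t : ℕ, MG φ G 1 ((-1) ^ t) t 0 0 := by
    intro t
    induction t with
    | zero => exact hone.congr rfl (by simp) (by simp) rfl rfl
    | succ t ih =>
      exact (m1.mul ih).congr (by ring) (by ring) (by push_cast; ring) (by ring) (by ring)
  have hrot : ∀ (δ : ZMod m), (δ = 1 ∨ δ = -1) → ∀ c : ZMod n, MG φ G 1 δ c 0 0 := by
    intro δ hδ c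
    have a := (hpow c.val).congr rfl rfl (ZMod.natCast_zmod_val c) rfl rfl
    have b := (hpow (c.val + n)).congr rfl rfl
      (show ((c.val + n : ℕ) : ZMod n) = c by simp) rfl rfl
    rw [pow_add, hno.neg_one_pow] at b
    rcases neg_one_pow_eq_or (ZMod m) c.val with h | h <;> rw [h] at a b <;>
      rcases hδ with rfl | rfl
    · exact a
    · simpa using b
    · simpa using b
    · exact a
  have h8 : MG φ G 1 1 0 8 (-8) :=
    (m2.mul m2).congr (by ring) (by ring) (by ring)
      (by rw [show (2 : ZMod n) = ((2 : ℕ) : ZMod n) by simp, map_natCast]; push_cast; ring)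
      (by rw [map_neg, map_one]; ring)
  have h8t : ∀ t : ℕ, MG φ G 1 1 0 (8 * t) (-(8 * t)) := by
    intro t
    induction t with
    | zero => exact hone.congr rfl rfl rfl (by simp) (by simp)
    | succ t ih =>
      exact (h8.mul ih).congr (by ring) (by ring) (by ring)
        (by rw [map_zero]; push_cast; ring) (by rw [map_one]; push_cast; ring)
  have hx : ∀ x : ZMod m, MG φ G 1 1 0 x (-x) := by
    intro x
    obtain ⟨u, hu⟩ := (h2.pow 3)
    have h := h8t ((↑u⁻¹ * x : ZMod m)).val
    have e : (8 : ZMod m) * (((↑u⁻¹ * x : ZMod m)).val : ZMod m) = x := by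
      rw [ZMod.natCast_zmod_val, show (8 : ZMod m) = 2 ^ 3 by norm_num, ← hu]
      simp
    rwa [e] at h
  have hy : ∀ x : ZMod m, MG φ G 1 1 0 0 x := by
    intro x
    exact ((hrot 1 (Or.inl rfl) (-1)).mul ((hx (-x)).mul (hrot 1 (Or.inl rfl) 1))).congr
      (by ring) (by ring) (by ring) (by simp) (by simp)
  have htr : ∀ α β : ZMod m, MG φ G 1 1 0 α β := by
    intro α β
    exact ((hx α).mul (hy (β + α))).congr (by ring) (by ring) (by ring) (by simp) (by simp)
  have hpos : ∀ (δ : ZMod m), (δ = 1 ∨ δ = -1) → ∀ (c : ZMod n) (α β : ZMod m),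
      MG φ G 1 δ c α β := by
    intro δ hδ c α β
    exact ((htr (α - β * φ c) β).mul (hrot δ hδ c)).congr (by ring) (by ring) (by ring)
      (by ring) (by simp)
  rcases hε with rfl | rfl
  · exact hpos δ hδ c α β
  · have hδ' : -δ = 1 ∨ -δ = -1 := by
      rcases hδ with rfl | rfl
      · right; rfl
      · left; simp
    refine ((hpos (-δ) hδ' (c - 2) (α - 6 * δ + (β + 4 * δ) * φ 2 - (β + 4 * δ) * φ 2
      - (- β - 4 * δ) * φ 2) (- β - 4 * δ)).mul m2).congr ?_ ?_ ?_ ?_ ?_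
    · ring
    · ring
    · ring
    · ring
    · simp only [map_neg, map_one]; ring

theorem RepG.inv {n m : ℕ} {φ : ZMod n →+* ZMod m} {g : Equiv.Perm (ZMod n × ZMod m)}
    {ε : ZMod n} {δ : ZMod m} {c : ZMod n} {α β : ZMod m}
    (h : RepG φ g ε δ c α β) (hε : ε * ε = 1) (hδ : δ * δ = 1) :
    RepG φ g⁻¹ ε δ (-(ε * c)) (-(δ * α) + δ * β * φ ε * φ c) (-(δ * β * φ ε)) := by
  intro v
  obtain ⟨a1, a2⟩ := h (g⁻¹ v)
  have hgv : g (g⁻¹ v) = v := by rw [← Equiv.Perm.mul_apply, mul_inv_cancel]; rfl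
  rw [hgv] at a1 a2
  have b1 : (g⁻¹ v).1 = ε * v.1 + -(ε * c) := by
    rw [a1]; linear_combination (-(g⁻¹ v).1) * hε
  refine ⟨b1, ?_⟩
  rw [a2, b1]
  simp only [map_add, map_mul, map_neg]
  linear_combination (-FF n m (g⁻¹ v)) * hδ

theorem statement11
    (m s n : ℕ) (hm : 3 ≤ m) (hmo : Odd m) (hs : 0 < s) (hso : Odd s) (hn : n = s * m)
    (σ₁ σ₂ : Equiv.Perm (ZMod n × ZMod m))
    (hσ₁ : ∀ (i : ZMod n) (j : ZMod m),
      σ₁ (i, j) = if i = 0 then (i + 1, 1 - j) else (i + 1, j))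
    (hσ₂ : ∀ (i : ZMod n) (j : ZMod m),
      σ₂ (i, j) = if i = 1 then (2 - i, 2 - j)
        else (2 - i, j + (-1 : ZMod m) ^ (zrep i - 1) * ((2 * zrep i - 3 : ℕ) : ZMod m)))
    :
    (∀ u₁ w₁ u₂ w₂ : ZMod n × ZMod m,
        (lexCycle n m).Adj u₁ w₁ → (lexCycle n m).Adj u₂ w₂ →
        ∃ g ∈ Subgroup.closure {σ₁, σ₂}, g u₁ = u₂ ∧ g w₁ = w₂) ∧
      Nat.card {g : Equiv.Perm (ZMod n × ZMod m) |
        g ∈ Subgroup.closure {σ₁, σ₂} ∧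
        g ((1, 1) : ZMod n × ZMod m) = (1, 1) ∧
        g ((2, 1) : ZMod n × ZMod m) = (2, 1)} = 2 := by
  have hn3 : 3 ≤ n := by rw [hn]; nlinarith
  have hno : Odd n := by rw [hn]; exact hso.mul hmo
  haveI : NeZero n := ⟨by omega⟩
  haveI : NeZero m := ⟨by omega⟩
  have hdvd : m ∣ n := ⟨s, by rw [hn, mul_comm]⟩
  let φ : ZMod n →+* ZMod m := ZMod.castHom hdvd (ZMod m)
  have h2 : IsUnit (2 : ZMod m) := by
    have := (ZMod.isUnit_iff_coprime 2 m).2 (Nat.coprime_two_left.2 hmo)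
    simpa using this
  have r1 := rep_s1 hn3 hno φ σ₁ hσ₁
  have r2 := rep_s2 hn3 hno φ σ₂ hσ₂
  set G := Subgroup.closure {σ₁, σ₂} with hG
  have g1 : σ₁ ∈ G := Subgroup.subset_closure (by simp)
  have g2 : σ₂ ∈ G := Subgroup.subset_closure (by simp)
  have hall := MG_all hno h2 φ G ⟨_, g1, r1⟩ ⟨_, g2, r2⟩
  have hadj : ∀ u w : ZMod n × ZMod m, (lexCycle n m).Adj u w →
      ∃ e : ℤ, e * e = 1 ∧ w.1 = u.1 + e := by
    intro u w h
    rw [lexCycle, SimpleGraph.fromRel_adj] at h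
    rcases h.2 with h | h
    · exact ⟨1, by norm_num, by simpa using h⟩
    · exact ⟨-1, by norm_num, by rw [h]; simp⟩
  constructor
  · intro u₁ w₁ u₂ w₂ h₁ h₂
    obtain ⟨e, he, hw⟩ := hadj _ _ h₁
    obtain ⟨f, hf, hw'⟩ := hadj _ _ h₂
    have hε : ((e * f : ℤ) : ZMod n) = 1 ∨ ((e * f : ℤ) : ZMod n) = -1 := by
      have : (e * f) * (e * f) = 1 := by linear_combination (f * f) * he + hf
      rcases mul_self_eq_one_iff.1 this with h | h <;> rw [h] <;> simp
    have hen : (e : ZMod n) * e = 1 := by exact_mod_cast congrArg (Int.cast : ℤ → ZMod n) he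
    have hem : (e : ZMod m) * e = 1 := by exact_mod_cast congrArg (Int.cast : ℤ → ZMod m) he
    obtain ⟨g, hg, r⟩ := hall _ hε 1 (Or.inl rfl) (u₂.1 - (e * f : ℤ) * u₁.1)
      (FF n m u₂ - FF n m u₁ - (e * ((FF n m w₂ - FF n m w₁) - (FF n m u₂ - FF n m u₁))) * φ u₁.1)
      (e * ((FF n m w₂ - FF n m w₁) - (FF n m u₂ - FF n m u₁)))
    refine ⟨g, hg, FF_inj h2 ?_ ?_, FF_inj h2 ?_ ?_⟩
    · rw [(r u₁).1]; ring
    · rw [(r u₁).2]; ring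
    · rw [(r w₁).1, hw, hw']; push_cast; linear_combination (f : ZMod n) * hen
    · rw [(r w₁).2, hw, map_add, map_intCast]
      linear_combination ((FF n m w₂ - FF n m w₁) - (FF n m u₂ - FF n m u₁)) * hem
  · have hform : ∀ g ∈ G, ∃ ε δ c α β, ε * ε = 1 ∧ (δ = 1 ∨ δ = -1) ∧ RepG φ g ε δ c α β := by
      intro g hg
      induction hg using Subgroup.closure_induction with
      | mem x hx =>
        rcases hx with rfl | rfl
        · exact ⟨_, _, _, _, _, by ring, Or.inr rfl, r1⟩
        · exact ⟨_, _, _, _, _, by ring, Or.inr rfl, r2⟩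
      | one => exact ⟨1, 1, 0, 0, 0, by ring, Or.inl rfl, fun v => by simp⟩
      | mul x y _ _ hx hy =>
        obtain ⟨ε, δ, c, α, β, a, b, r⟩ := hx
        obtain ⟨ε', δ', c', α', β', a', b', r'⟩ := hy
        refine ⟨_, _, _, _, _, ?_, ?_, r.mul r'⟩
        · linear_combination (ε' * ε') * a + a'
        · rcases b with rfl | rfl <;> rcases b' with rfl | rfl <;> simp
      | inv x _ hx =>
        obtain ⟨ε, δ, c, α, β, a, b, r⟩ := hx
        exact ⟨_, _, _, _, _, a, b, r.inv a (by rcases b with rfl | rfl <;> ring)⟩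
    set a := FF n m (1, 1) with ha
    set b := FF n m (2, 1) with hb
    have φ2 : φ 2 = 2 := by
      rw [show (2 : ZMod n) = ((2 : ℕ) : ZMod n) by simp, map_natCast]; simp
    obtain ⟨g, hg, r⟩ := hall 1 (Or.inl rfl) (-1) (Or.inr rfl) 0 (2 * a - 2 * (b - a)) (2 * (b - a))
    have hone : RepG φ 1 1 1 0 0 0 := fun v => by simp
    have hset : {g : Equiv.Perm (ZMod n × ZMod m) |
        g ∈ G ∧ g ((1, 1) : ZMod n × ZMod m) = (1, 1) ∧
        g ((2, 1) : ZMod n × ZMod m) = (2, 1)} = {1, g} := by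
      ext x
      simp only [Set.mem_setOf_eq, Set.mem_insert_iff, Set.mem_singleton_iff]
      constructor
      · rintro ⟨hx, x1, x2⟩
        obtain ⟨ε, δ, c, α, β, _, hδ, rx⟩ := hform x hx
        have p1 := rx (1, 1)
        have p2 := rx (2, 1)
        rw [x1, ← ha] at p1
        rw [x2, ← hb] at p2
        obtain ⟨p1, q1⟩ := p1
        obtain ⟨p2, q2⟩ := p2
        simp only [map_one, φ2] at p1 q1 p2 q2
        have hε : ε = 1 := by linear_combination p1 - p2
        have hc : c = 0 := by linear_combination p2 - 2 * p1
        have hβ : β = (b - a) - δ * (b - a) := by linear_combination q1 - q2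
        have hα : α = a - δ * a - ((b - a) - δ * (b - a)) := by
          linear_combination q2 - 2 * q1
        subst hε hc hβ hα
        rcases hδ with rfl | rfl
        · left
          refine RepG.ext h2 rx ?_
          convert hone using 1 <;> ring
        · right
          refine RepG.ext h2 rx ?_
          convert r using 1 <;> ring
      · rintro (rfl | rfl)
        · exact ⟨G.one_mem, rfl, rfl⟩
        · refine ⟨hg, FF_inj h2 ?_ ?_, FF_inj h2 ?_ ?_⟩
          · rw [(r _).1]; simp
          · rw [(r _).2, ← ha, map_one]; ring
          · rw [(r _).1]; simp
          · rw [(r _).2, ← hb, φ2]; ring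
    rw [hset, Nat.card_coe_set_eq, Set.ncard_pair]
    rintro rfl
    have k := (r (1, 2)).2
    have e1 : zrep (1 : ZMod n) = 1 := zrep_unique _ _ le_rfl (by omega) (by simp)
    have ha' : a = -1 := by rw [ha]; simp only [FF, e1]; ring
    have hk : FF n m (1, 2) = -3 := by simp only [FF, e1]; ring
    rw [Equiv.Perm.one_apply, hk, ha', map_one] at k
    have k4 : (2 : ZMod m) * 2 = 2 * 0 := by linear_combination -k
    have k2 : ((2 : ℕ) : ZMod m) = 0 := by exact_mod_cast h2.mul_left_cancel k4
    rw [ZMod.natCast_eq_zero_iff] at k2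
    have := Nat.le_of_dvd (by norm_num) k2
    omega
end

section
/- The permutation η₁ = σ₁σ₂ρ has order n. -/
theorem statement12
    (m s n : ℕ) (hm : 3 ≤ m) (hmo : Odd m) (hs : 0 < s) (hso : Odd s) (hn : n = s * m)
    (σ₁ σ₂ ρ : Equiv.Perm (ZMod n × ZMod m))
    (hσ₁ : ∀ (i : ZMod n) (j : ZMod m),
      σ₁ (i, j) = if i = 0 then (i + 1, 1 - j) else (i + 1, j))
    (hσ₂ : ∀ (i : ZMod n) (j : ZMod m),
      σ₂ (i, j) = if i = 1 then (2 - i, 2 - j)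
        else (2 - i, j + (-1 : ZMod m) ^ (zrep i - 1) * ((2 * zrep i - 3 : ℕ) : ZMod m)))
    (hρ : ∀ (i : ZMod n) (j : ZMod m),
      ρ (i, j) = if i = 1 then (2 - i, j) else (2 - i, 1 - j))
    :
    orderOf (ρ * σ₂ * σ₁) = n := by
  have hn3 : 3 ≤ n := by rw [hn]; nlinarith
  have hno : Odd n := by rw [hn]; exact hso.mul hmo
  have hnm : (n : ZMod m) = 0 := by rw [hn]; simp
  haveI : NeZero n := ⟨by omega⟩
  haveI : Fact (1 < n) := ⟨by omega⟩
  set η := ρ * σ₂ * σ₁ with hη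
  have h0 : ∀ j, η (0, j) = (1, j + 1) := by
    intro j
    simp only [hη, Equiv.Perm.mul_apply]
    rw [hσ₁, if_pos rfl, hσ₂, if_pos (by ring), hρ, if_pos (by ring)]
    ext
    · simp
    · simp; ring
  have h1 : ∀ (v : ℕ) (j), 1 ≤ v → v < n →
      η ((v : ZMod n), j) = ((v : ZMod n) + 1, 1 - j - (-1) ^ v * (2 * v - 1)) := by
    intro v j hv1 hvn
    have hv0 : (v : ZMod n) ≠ 0 := by
      intro h
      rw [ZMod.natCast_eq_zero_iff] at h
      have := Nat.le_of_dvd (by omega) h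
      omega
    have hz : zrep ((v : ZMod n) + 1) = v + 1 := by
      have : ((v : ZMod n) + 1) = ((v + 1 : ℕ) : ZMod n) := by push_cast; rfl
      rw [this, zrep, ZMod.val_natCast]
      rcases Nat.lt_or_ge (v + 1) n with h | h
      · rw [Nat.mod_eq_of_lt h]; simp
      · have : v + 1 = n := by omega
        rw [this]; simp
    simp only [hη, Equiv.Perm.mul_apply]
    rw [hσ₁, if_neg hv0, hσ₂, if_neg (by simpa using hv0), hρ, if_neg, hz]
    · have : 2 * (v + 1) - 3 = 2 * v - 1 := by omega
      rw [this, Nat.cast_sub (by omega)]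
      ext
      · simp
      · simp; ring
    · intro h
      apply hv0
      linear_combination -h
  have hfst : ∀ x, (η x).1 = x.1 + 1 := by
    rintro ⟨i, j⟩
    by_cases hi : i = 0
    · subst hi; rw [h0]; simp
    · have := h1 i.val j (by
        have := (ZMod.val_ne_zero i).2 hi
        omega) (ZMod.val_lt i)
      rw [ZMod.natCast_zmod_val] at this
      rw [this]
  have hfstp : ∀ (k : ℕ) x, ((η ^ k) x).1 = x.1 + k := by
    intro k x
    induction k with
    | zero => simp
    | succ k ih => rw [pow_succ', Equiv.Perm.mul_apply, hfst, ih]; push_cast; ring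
  have hf : ∀ (t : ℕ) (j), t < n → (η ^ (t + 1)) (0, j) =
      (((t + 1 : ℕ) : ZMod n),
        (-1) ^ t * (j + 1 - (∑ u ∈ Finset.range t, (-1 : ZMod m) ^ u) - (t : ZMod m) ^ 2)) := by
    intro t j ht
    induction t with
    | zero => simp [h0]
    | succ t ih =>
      rw [pow_succ', Equiv.Perm.mul_apply, ih (by omega), h1 _ _ (by omega) ht,
        Finset.sum_range_succ]
      ext
      · simp
      · have : (-1 : ZMod m) ^ t * (-1) ^ t = 1 := by
          rw [← mul_pow]; simp
        push_cast
        rw [pow_succ]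
        linear_combination -this
  have hfix : ∀ j, (η ^ n) (0, j) = (0, j) := by
    intro j
    obtain ⟨k, hk⟩ := hno
    have := hf (n - 1) j (by omega)
    rw [show n - 1 + 1 = n by omega] at this
    have he : Even (n - 1) := ⟨k, by omega⟩
    rw [this, he.neg_one_pow, neg_one_geom_sum, if_pos he, Nat.cast_sub (by omega), hnm]
    ext <;> simp
  apply Nat.dvd_antisymm
  · apply orderOf_dvd_of_pow_eq_one
    ext1 x
    have hy : ∃ y, (η ^ x.1.val) y = x := (η ^ x.1.val).surjective x
    obtain ⟨y, hy⟩ := hy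
    have hy1 : y.1 = 0 := by
      have := hfstp x.1.val y
      rw [hy, ZMod.natCast_zmod_val] at this
      simpa using this
    have hyn : (η ^ n) y = y := by
      obtain ⟨a, b⟩ := y
      simp only at hy1
      subst hy1
      exact hfix b
    rw [← hy, ← Equiv.Perm.mul_apply, ← pow_add, add_comm, pow_add, Equiv.Perm.mul_apply, hyn]
    simp [hy]
  · have := hfstp (orderOf η) (0, 0)
    rw [pow_orderOf_eq_one] at this
    rw [← ZMod.natCast_eq_zero_iff]
    simpa using this.symm
end

section
/- The permutation ρ defined by ρ(i,j) = (2−i, j) if i ≡ 1 (mod n) and ρ(i,j) = (2−i, 1−j) otherwise is an involutory automorphism of Γ that belongs to the subgroup G = ⟨σ₁, σ₂⟩, fixes the vertex (1,1), and satisfies ρσ₁ρ = σ₁⁻¹ and ρσ₂ρ = σ₂⁻¹. -/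
theorem statement15
    (m s n : ℕ) (hm : 3 ≤ m) (hmo : Odd m) (hs : 0 < s) (hs4 : s % 4 = 2) (hn : n = s * m)
    (σ₁ σ₂ ρ : Equiv.Perm (ZMod n × ZMod m))
    (hσ₁ : ∀ (i : ZMod n) (j : ZMod m),
      σ₁ (i, j) = if i = 0 then (i + 1, 1 - j) else (i + 1, j))
    (hσ₂ : ∀ (i : ZMod n) (j : ZMod m),
      σ₂ (i, j) = if i = 1 then (2 - i, 2 - j)
        else if zrep i % 4 = 0 ∨ zrep i % 4 = 3 then (2 - i, j + 1) else (2 - i, j - 1))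
    (hρ : ∀ (i : ZMod n) (j : ZMod m),
      ρ (i, j) = if i = 1 then (2 - i, j) else (2 - i, 1 - j))
    :
    (∀ u v : ZMod n × ZMod m, (lexCycle n m).Adj (ρ u) (ρ v) ↔ (lexCycle n m).Adj u v) ∧
      ρ * ρ = 1 ∧ ρ ∈ Subgroup.closure {σ₁, σ₂} ∧
      ρ ((1, 1) : ZMod n × ZMod m) = (1, 1) ∧
      ρ * σ₁ * ρ = σ₁⁻¹ ∧ ρ * σ₂ * ρ = σ₂⁻¹ := by
  obtain ⟨k, hk⟩ := hmo
  have hn4 : n % 4 = 2 := by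
    subst hn
    rw [Nat.mul_mod, hs4]
    have : m % 4 = 1 ∨ m % 4 = 3 := by omega
    rcases this with h | h <;> rw [h]
  have hn6 : 6 ≤ n := by subst hn; nlinarith [show 2 ≤ s by omega]
  clear hn hs4 hs
  have hk0 : (2 * k + 1 : ZMod m) = 0 := by
    have := ZMod.natCast_self m
    rw [hk] at this ⊢
    push_cast at this
    exact this
  have hn0 : NeZero n := ⟨by omega⟩
  have rep : ∀ i : ZMod n, ∃ a : ℕ, 1 ≤ a ∧ a ≤ n ∧ i = (a : ZMod n) := by
    intro i
    have h1 := ZMod.val_lt i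
    by_cases h : i.val = 0
    · exact ⟨n, by omega, le_rfl, by rw [ZMod.natCast_self]; exact (ZMod.val_eq_zero i).1 h⟩
    · exact ⟨i.val, by omega, by omega, by simp⟩
  have zr : ∀ a : ℕ, 1 ≤ a → a ≤ n → zrep (a : ZMod n) = a := by
    intro a h1 h2
    unfold zrep
    rcases Nat.lt_or_ge a n with h | h
    · rw [ZMod.val_natCast_of_lt h, if_neg (by omega)]
    · have : a = n := by omega
      subst this
      simp
  have inj : ∀ a b : ℕ, 1 ≤ a → a ≤ n → 1 ≤ b → b ≤ n → (a : ZMod n) = b → a = b := by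
    intro a b h1 h2 h3 h4 h
    rw [← zr a h1 h2, h, zr b h3 h4]
  have one_iff : ∀ a : ℕ, 1 ≤ a → a ≤ n → ((a : ZMod n) = 1 ↔ a = 1) := by
    intro a h1 h2
    refine ⟨fun h => inj a 1 h1 h2 le_rfl (by omega) (by simpa using h), fun h => by simp [h]⟩
  have zero_iff : ∀ a : ℕ, 1 ≤ a → a ≤ n → ((a : ZMod n) = 0 ↔ a = n) := by
    intro a h1 h2
    refine ⟨fun h => inj a n h1 h2 (by omega) le_rfl (by simpa using h), fun h => by simp [h]⟩
  have two_sub : ∀ a : ℕ, a ≤ n → (2 - (a : ZMod n)) = ((n + 2 - a : ℕ) : ZMod n) := by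
    intro a h2
    rw [Nat.cast_sub (by omega)]
    simp
  have S1 : ∀ (a : ℕ) (j : ZMod m), 1 ≤ a → a < n →
      σ₁ ((a : ZMod n), j) = (((a + 1 : ℕ) : ZMod n), j) := by
    intro a j h1 h2
    rw [hσ₁, if_neg (by rw [zero_iff a h1 h2.le]; omega)]
    simp
  have S1n : ∀ j : ZMod m, σ₁ ((n : ZMod n), j) = (((1 : ℕ) : ZMod n), 1 - j) := by
    intro j
    rw [hσ₁, if_pos (by simp)]
    simp
  have S2o : ∀ j : ZMod m, σ₂ (((1 : ℕ) : ZMod n), j) = (((1 : ℕ) : ZMod n), 2 - j) := by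
    intro j
    rw [hσ₂, if_pos (by simp)]
    simp; ring
  let e : ℕ → ZMod m := fun a => if a % 4 = 0 ∨ a % 4 = 3 then 1 else -1
  have S2 : ∀ (a : ℕ) (j : ZMod m), 2 ≤ a → a ≤ n →
      σ₂ ((a : ZMod n), j) = (((n + 2 - a : ℕ) : ZMod n), j + e a) := by
    intro a j h1 h2
    rw [hσ₂, if_neg (by rw [one_iff a (by omega) h2]; omega), zr a (by omega) h2, two_sub a h2]
    simp only [e]
    split_ifs
    · rfl
    · rw [sub_eq_add_neg j 1]
  have Ro : ∀ j : ZMod m, ρ (((1 : ℕ) : ZMod n), j) = (((1 : ℕ) : ZMod n), j) := by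
    intro j
    rw [hρ, if_pos (by simp)]
    simp; ring
  have R : ∀ (a : ℕ) (j : ZMod m), 2 ≤ a → a ≤ n →
      ρ ((a : ZMod n), j) = (((n + 2 - a : ℕ) : ZMod n), 1 - j) := by
    intro a j h1 h2
    rw [hρ, if_neg (by rw [one_iff a (by omega) h2]; omega), two_sub a h2]
  have perm_ext : ∀ f g : Equiv.Perm (ZMod n × ZMod m),
      (∀ (a : ℕ) (j : ZMod m), 1 ≤ a → a ≤ n → f ((a : ZMod n), j) = g ((a : ZMod n), j)) →
      f = g := by
    intro f g h
    apply Equiv.ext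
    rintro ⟨i, j⟩
    obtain ⟨a, h1, h2, rfl⟩ := rep i
    exact h a j h1 h2
  let d : ℕ → ZMod m := fun a => if a % 4 = 0 then 2 else if a % 4 = 2 then -2 else 0
  have ee : ∀ a : ℕ, 2 ≤ a → a ≤ n → e a + e (n + 2 - a) = d a := by
    intro a h1 h2
    have : a % 4 = 0 ∨ a % 4 = 1 ∨ a % 4 = 2 ∨ a % 4 = 3 := by omega
    simp only [e, d]
    rcases this with h | h | h | h
    · rw [if_pos (by omega), if_pos (by omega), if_pos (by omega)]; norm_num
    · rw [if_neg (by omega), if_pos (by omega), if_neg (by omega), if_neg (by omega)]; norm_num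
    · rw [if_neg (by omega), if_neg (by omega), if_neg (by omega), if_pos (by omega)]; norm_num
    · rw [if_pos (by omega), if_neg (by omega), if_neg (by omega), if_neg (by omega)]; norm_num
  have D1 : ∀ (a : ℕ) (j : ZMod m), 1 ≤ a → a ≤ n →
      (σ₂ * σ₂) ((a : ZMod n), j) = ((a : ZMod n), j + d a) := by
    intro a j h1 h2
    rw [Equiv.Perm.mul_apply]
    rcases Nat.eq_or_lt_of_le h1 with h | h
    · subst h
      rw [S2o, S2o]
      simp [d]
    · rw [S2 a _ h h2, S2 _ _ (by omega) (by omega), ← ee a h h2]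
      rw [show n + 2 - (n + 2 - a) = a by omega, add_assoc]
  have D2 : ∀ (t a : ℕ) (j : ZMod m), 1 ≤ a → a ≤ n →
      ((σ₂ * σ₂) ^ t) ((a : ZMod n), j) = ((a : ZMod n), j + t * d a) := by
    intro t a j h1 h2
    induction t with
    | zero => simp
    | succ t ih =>
      rw [pow_succ', Equiv.Perm.mul_apply, ih, D1 a _ h1 h2]
      push_cast
      congr 1
      ring
  let f : ℕ → ZMod m := fun a => if a % 4 = 0 then -1 else if a % 4 = 2 then 1 else 0
  have kd : ∀ a, (k : ZMod m) * d a = f a := by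
    intro a
    simp only [d, f]
    split_ifs
    · linear_combination hk0
    · linear_combination -hk0
    · simp
  have T0 : ∀ (t a : ℕ) (j : ZMod m), 1 ≤ a → a + t ≤ n →
      (σ₁ ^ t) ((a : ZMod n), j) = (((a + t : ℕ) : ZMod n), j) := by
    intro t a j h1 h2
    induction t with
    | zero => simp
    | succ t ih =>
      rw [pow_succ', Equiv.Perm.mul_apply, ih (by omega), S1 _ _ (by omega) (by omega)]
      rfl
  have T : ∀ (a : ℕ) (j : ZMod m), 1 ≤ a → a ≤ n →
      (σ₁ ^ n) ((a : ZMod n), j) = ((a : ZMod n), 1 - j) := by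
    intro a j h1 h2
    have hh : σ₁ ^ n = σ₁ ^ (a - 1) * (σ₁ * σ₁ ^ (n - a)) := by
      rw [← pow_succ', ← pow_add]
      congr 1
      omega
    rw [hh, Equiv.Perm.mul_apply, Equiv.Perm.mul_apply, T0 _ _ _ h1 (by omega),
      show a + (n - a) = n by omega, S1n, T0 _ _ _ le_rfl (by omega),
      show 1 + (a - 1) = a by omega]
  have inv : ρ * ρ = 1 := by
    apply perm_ext
    intro a j h1 h2
    rw [Equiv.Perm.mul_apply, Equiv.Perm.one_apply]
    rcases Nat.eq_or_lt_of_le h1 with h | h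
    · subst h
      rw [Ro, Ro]
    · rw [R _ _ h h2, R _ _ (by omega) (by omega), show n + 2 - (n + 2 - a) = a by omega,
        sub_sub_cancel]
  have mem : σ₁ * ρ = (σ₂ * σ₂) ^ k * σ₁ * σ₁ ^ n * (σ₂ * σ₂) ^ k * σ₂ := by
    apply perm_ext
    intro a j h1 h2
    simp only [Equiv.Perm.mul_apply]
    have hD : ∀ (a : ℕ) (j : ZMod m), 1 ≤ a → a ≤ n →
      ((σ₂ * σ₂) ^ k) ((a : ZMod n), j) = ((a : ZMod n), j + f a) := by
      intro a j h1 h2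
      rw [D2 k a j h1 h2, kd]
    rcases Nat.eq_or_lt_of_le h1 with h | h
    · subst h
      rw [Ro, S1 _ _ le_rfl (by omega), S2o, hD _ _ le_rfl (by omega), T _ _ le_rfl (by omega),
        S1 _ _ le_rfl (by omega), hD _ _ (by omega) (by omega)]
      simp only [f]
      norm_num
      ring
    · rw [R _ _ h h2, S2 _ _ h h2, hD _ _ (by omega) (by omega), T _ _ (by omega) (by omega)]
      have h4 : a % 4 = 0 ∨ a % 4 = 1 ∨ a % 4 = 2 ∨ a % 4 = 3 := by omega
      rcases Nat.eq_or_lt_of_le h with h' | h'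
      · subst h'
        rw [show n + 2 - Nat.succ 1 = n by omega, S1n, S1n, hD _ _ le_rfl (by omega)]
        simp [f, e, hn4]
      · rw [S1 _ _ (by omega) (by omega), S1 _ _ (by omega) (by omega),
          hD _ _ (by omega) (by omega)]
        congr 1
        simp only [f, e]
        split_ifs <;> first | (exfalso; omega) | ring
  have R1 : ∀ (u : ZMod n × ZMod m), (ρ u).1 = 2 - u.1 := by
    rintro ⟨i, j⟩
    rw [hρ]
    split_ifs <;> rfl
  refine ⟨?_, inv, ?_, ?_, ?_, ?_⟩
  · intro u v
    unfold lexCycle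
    rw [SimpleGraph.fromRel_adj, SimpleGraph.fromRel_adj, R1, R1, ρ.injective.ne_iff]
    have : ∀ x y : ZMod n, (2 - y = 2 - x + 1 ↔ x = y + 1) := by
      intro x y
      constructor <;> intro h <;> linear_combination h
    rw [this, this, or_comm]
  · have h1 : σ₁ ∈ Subgroup.closure {σ₁, σ₂} := Subgroup.subset_closure (by simp)
    have h2 : σ₂ ∈ Subgroup.closure {σ₁, σ₂} := Subgroup.subset_closure (by simp)
    have : ρ = σ₁⁻¹ * ((σ₂ * σ₂) ^ k * σ₁ * σ₁ ^ n * (σ₂ * σ₂) ^ k * σ₂) := by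
      rw [← mem, inv_mul_cancel_left]
    rw [this]
    have h3 := Subgroup.pow_mem _ (mul_mem h2 h2) k
    exact mul_mem (inv_mem h1)
      (mul_mem (mul_mem (mul_mem (mul_mem h3 h1) (Subgroup.pow_mem _ h1 n)) h3) h2)
  · simpa using Ro 1
  · rw [eq_inv_iff_mul_eq_one]
    apply perm_ext
    intro a j h1 h2
    simp only [Equiv.Perm.mul_apply, Equiv.Perm.one_apply]
    rcases Nat.eq_or_lt_of_le h2 with h | h
    · subst h
      rw [S1n, Ro, S1 _ _ le_rfl (by omega), R _ _ (by omega) (by omega),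
        show a + 2 - (1 + 1) = a by omega, sub_sub_cancel]
    · rw [S1 _ _ h1 h, R _ _ (by omega) (by omega)]
      rcases Nat.eq_or_lt_of_le h1 with h' | h'
      · subst h'
        rw [show n + 2 - (1 + 1) = n by omega, S1n, Ro, sub_sub_cancel]
      · rw [S1 _ _ (by omega) (by omega), R _ _ (by omega) (by omega), sub_sub_cancel,
          show n + 2 - (n + 2 - (a + 1) + 1) = a by omega]
  · rw [eq_inv_iff_mul_eq_one]
    apply perm_ext
    intro a j h1 h2
    simp only [Equiv.Perm.mul_apply, Equiv.Perm.one_apply]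
    rcases Nat.eq_or_lt_of_le h1 with h | h
    · subst h
      rw [S2o, Ro, S2o, Ro, sub_sub_cancel]
    · rw [S2 _ _ h h2, R _ _ (by omega) (by omega), show n + 2 - (n + 2 - a) = a by omega,
        S2 _ _ h h2, R _ _ (by omega) (by omega), show n + 2 - (n + 2 - a) = a by omega]
      congr 1
      ring
end
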